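/- arXiv:1908.06398 — 10 statements merged into one kernel-verified Lean document; each statement's English description precedes it below -/
import Mathlib

section
/- Let α ≥ 1 be a real number, let a < b be reals, let u ∈ I_{α,[a,b]}, and let λ ∈ [0,1]. Then λ^α·u(a) + (1 − λ^α)·u(b) ≤ u(λ·a + (1−λ)·b). (Equivalently: the point mass at λa+(1−λ)b dominates, in the α,[a,b]-concave stochastic order, the two-point lottery giving a with probability λ^α and b with probability 1−λ^α.) -/
open MeasureTheory Set

noncomputable section

/-- A nonnegative function `v` on `[a,b]` is `α`-convex if `x ↦ (v x)^(1/α)` is convex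
on `[a,b]`. -/
def AlphaConvexOn (α a b : ℝ) (v : ℝ → ℝ) : Prop :=
  (∀ x ∈ Icc a b, 0 ≤ v x) ∧ ConvexOn ℝ (Icc a b) (fun x => v x ^ (1 / α))

/-- `u ∈ I_{α,[a,b]}`: `u` is bounded and measurable on `[a,b]`, weakly increasing on
`[a,b]`, and `x ↦ u b - u x` is `α`-convex on `[a,b]`. -/
def MemI (α a b : ℝ) (u : ℝ → ℝ) : Prop :=
  (∃ M, ∀ x ∈ Icc a b, |u x| ≤ M) ∧
  Measurable u ∧
  MonotoneOn u (Icc a b) ∧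
  AlphaConvexOn α a b (fun x => u b - u x)

/-- `F ⪰_{α,[a,b]-I} G`: the `α,[a,b]`-concave stochastic order. -/
def ConcaveOrder (α a b : ℝ) (F G : Measure ℝ) : Prop :=
  ∀ u : ℝ → ℝ, MemI α a b u → ∫ x, u x ∂G ≤ ∫ x, u x ∂F

/-- `F ⪰_{n,[a,b]-S} G`: the `n,[a,b]`-sufficient stochastic order. -/
def SuffOrder (n : ℕ) (a b : ℝ) (F G : Measure ℝ) : Prop :=
  ∀ c : Fin n → ℝ, (∀ i, c i ∈ Icc a b) →
    ∫ x, ∏ i, max (c i - x) 0 ∂F ≤ ∫ x, ∏ i, max (c i - x) 0 ∂G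

/-- The cumulative distribution function of a Borel measure on `ℝ`. -/
def cdfR (μ : Measure ℝ) (x : ℝ) : ℝ := (μ (Iic x)).toReal

section ConvexRpow

variable {E : Type*} [AddCommMonoid E] [SMul ℝ E] {s : Set E} {v : E → ℝ} {α : ℝ} {x y : E}
  {l m : ℝ}

lemma combo_le_rpow_of_convexOn_rpow (hα : 0 < α) (hv : ∀ z ∈ s, 0 ≤ v z)
    (hconv : ConvexOn ℝ s fun z ↦ v z ^ (1 / α)) (hx : x ∈ s) (hy : y ∈ s)
    (hl : 0 ≤ l) (hm : 0 ≤ m) (hlm : l + m = 1) :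
    v (l • x + m • y) ≤ (l * v x ^ (1 / α) + m * v y ^ (1 / α)) ^ α := by
  have hvx : 0 ≤ v x := hv x hx
  have hvy : 0 ≤ v y := hv y hy
  have hvxy : 0 ≤ v (l • x + m • y) := hv _ (hconv.1 hx hy hl hm hlm)
  rw [← Real.rpow_inv_le_iff_of_pos hvxy (by positivity) hα, ← one_div]
  exact hconv.2 hx hy hl hm hlm

lemma combo_le_rpow_mul_of_convexOn_rpow_of_eq_zero (hα : 0 < α) (hv : ∀ z ∈ s, 0 ≤ v z)
    (hconv : ConvexOn ℝ s fun z ↦ v z ^ (1 / α)) (hx : x ∈ s) (hy : y ∈ s) (hvy : v y = 0)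
    (hl : 0 ≤ l) (hm : 0 ≤ m) (hlm : l + m = 1) :
    v (l • x + m • y) ≤ l ^ α * v x :=
  calc
    v (l • x + m • y) ≤ (l * v x ^ (1 / α) + m * v y ^ (1 / α)) ^ α :=
      combo_le_rpow_of_convexOn_rpow hα hv hconv hx hy hl hm hlm
    _ = (l * v x ^ (1 / α)) ^ α := by
      rw [hvy, Real.zero_rpow (one_div_pos.2 hα).ne', mul_zero, add_zero]
    _ = l ^ α * v x := by
      rw [Real.mul_rpow hl (Real.rpow_nonneg (hv x hx) _), one_div,
        Real.rpow_inv_rpow (hv x hx) hα.ne']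

end ConvexRpow

theorem stmt_0_general {α a b : ℝ} (hα : 0 < α) (hab : a ≤ b) {u : ℝ → ℝ}
    (hu : AlphaConvexOn α a b fun x ↦ u b - u x) {l : ℝ} (hl : l ∈ Icc (0 : ℝ) 1) :
    l ^ α * u a + (1 - l ^ α) * u b ≤ u (l * a + (1 - l) * b) := by
  have gap_le : u b - u (l * a + (1 - l) * b) ≤ l ^ α * (u b - u a) :=
    combo_le_rpow_mul_of_convexOn_rpow_of_eq_zero hα hu.1 hu.2 (left_mem_Icc.2 hab)
      (right_mem_Icc.2 hab) (sub_self (u b)) hl.1 (sub_nonneg.2 hl.2) (add_sub_cancel l 1)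
  linarith

theorem stmt_0 (α a b : ℝ) (hα : 1 ≤ α) (hab : a < b) (u : ℝ → ℝ)
    (hu : MemI α a b u) (l : ℝ) (hl : l ∈ Icc (0:ℝ) 1) :
    l ^ α * u a + (1 - l ^ α) * u b ≤ u (l * a + (1 - l) * b) :=
  stmt_0_general (zero_lt_one.trans_le hα) hab.le hu.2.2.2 hl
end
end

section
/- Let α ≥ 1 be a real number, let a < b be reals, and let u ∈ I_{α,[a,b]}. Let n be a positive integer, let λ₁,…,λₙ ∈ (0,1), and let p₁,…,pₙ ∈ (0,1) with p₁+⋯+pₙ = 1. Then ∑_{i=1}^n p_i·u(λ_i·a + (1−λ_i)·b) ≥ (∑_{i=1}^n p_i·λ_i^α)·u(a) + (1 − ∑_{i=1}^n p_i·λ_i^α)·u(b). -/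
open MeasureTheory Set

noncomputable section

/-!
Set `v x = u b - u x`. Since `v ^ (1 / α)` is convex and vanishes at `b`, its value at
`t * a + (1 - t) * b` is at most `t * v a ^ (1 / α)`. Raising to the power `α` gives
`v (t * a + (1 - t) * b) ≤ t ^ α * v a`, and the claim is the `p`-average of these inequalities.
-/

section ConvexRoot

variable {E : Type*} [AddCommMonoid E] [SMul ℝ E] {s : Set E} {α : ℝ} {x y : E}

theorem le_rpow_mul_of_convexOn_rpow_one_div {v : E → ℝ} (hα : 0 < α)
    (hv : ∀ z ∈ s, 0 ≤ v z) (hconv : ConvexOn ℝ s fun z => v z ^ (1 / α))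
    (hx : x ∈ s) (hy : y ∈ s) (hvy : v y = 0) {t : ℝ} (ht : t ∈ Icc (0 : ℝ) 1) :
    v (t • x + (1 - t) • y) ≤ t ^ α * v x := by
  obtain ⟨ht₀, ht₁⟩ := ht
  have hmem : t • x + (1 - t) • y ∈ s :=
    hconv.1 hx hy ht₀ (sub_nonneg.2 ht₁) (add_sub_cancel t 1)
  have hroot : 0 ≤ v x ^ α⁻¹ := Real.rpow_nonneg (hv x hx) _
  have hchord : v (t • x + (1 - t) • y) ^ α⁻¹ ≤ t * v x ^ α⁻¹ := by
    simpa [hvy, Real.zero_rpow (inv_ne_zero hα.ne')] using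
      hconv.2 hx hy ht₀ (sub_nonneg.2 ht₁) (add_sub_cancel t 1)
  calc v (t • x + (1 - t) • y)
      ≤ (t * v x ^ α⁻¹) ^ α :=
        (Real.rpow_inv_le_iff_of_pos (hv _ hmem) (mul_nonneg ht₀ hroot) hα).1 hchord
    _ = t ^ α * v x := by
        rw [Real.mul_rpow ht₀ hroot, Real.rpow_inv_rpow (hv x hx) hα.ne']

theorem rpow_mul_add_le_of_convexOn_rpow_sub {u : E → ℝ} (hα : 0 < α)
    (hu : ∀ z ∈ s, u z ≤ u y) (hconv : ConvexOn ℝ s fun z => (u y - u z) ^ (1 / α))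
    (hx : x ∈ s) (hy : y ∈ s) {t : ℝ} (ht : t ∈ Icc (0 : ℝ) 1) :
    t ^ α * u x + (1 - t ^ α) * u y ≤ u (t • x + (1 - t) • y) := by
  have hdrop : u y - u (t • x + (1 - t) • y) ≤ t ^ α * (u y - u x) :=
    le_rpow_mul_of_convexOn_rpow_one_div (v := fun z => u y - u z) hα
      (fun z hz => sub_nonneg.2 (hu z hz)) hconv hx hy (sub_self _) ht
  linarith

theorem stmt_1_general {ι : Type*} {I : Finset ι} {u : E → ℝ} {l p : ι → ℝ} (hα : 0 < α)
    (hu : ∀ z ∈ s, u z ≤ u y) (hconv : ConvexOn ℝ s fun z => (u y - u z) ^ (1 / α))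
    (hx : x ∈ s) (hy : y ∈ s) (hl : ∀ i ∈ I, l i ∈ Icc (0 : ℝ) 1) (hp : ∀ i ∈ I, 0 ≤ p i)
    (hsum : ∑ i ∈ I, p i = 1) :
    (∑ i ∈ I, p i * l i ^ α) * u x + (1 - ∑ i ∈ I, p i * l i ^ α) * u y ≤
      ∑ i ∈ I, p i * u (l i • x + (1 - l i) • y) := by
  calc (∑ i ∈ I, p i * l i ^ α) * u x + (1 - ∑ i ∈ I, p i * l i ^ α) * u y
      = (∑ i ∈ I, p i * l i ^ α) * u x + (∑ i ∈ I, p i - ∑ i ∈ I, p i * l i ^ α) * u y := by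
        rw [hsum]
    _ = ∑ i ∈ I, p i * (l i ^ α * u x + (1 - l i ^ α) * u y) := by
        rw [← Finset.sum_sub_distrib, Finset.sum_mul, Finset.sum_mul, ← Finset.sum_add_distrib]
        exact Finset.sum_congr rfl fun i _ => by ring
    _ ≤ ∑ i ∈ I, p i * u (l i • x + (1 - l i) • y) :=
        Finset.sum_le_sum fun i hi => mul_le_mul_of_nonneg_left
          (rpow_mul_add_le_of_convexOn_rpow_sub hα hu hconv hx hy (hl i hi)) (hp i hi)

end ConvexRoot

theorem stmt_1 (α a b : ℝ) (hα : 1 ≤ α) (hab : a < b) (u : ℝ → ℝ) (hu : MemI α a b u)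
    (n : ℕ) (hn : 0 < n) (l p : Fin n → ℝ)
    (hl : ∀ i, l i ∈ Ioo (0:ℝ) 1) (hp : ∀ i, p i ∈ Ioo (0:ℝ) 1)
    (hsum : ∑ i, p i = 1) :
    (∑ i, p i * l i ^ α) * u a + (1 - ∑ i, p i * l i ^ α) * u b ≤
      ∑ i, p i * u (l i * a + (1 - l i) * b) := by
  obtain ⟨-, -, -, hnonneg, hconv⟩ := hu
  exact stmt_1_general (zero_lt_one.trans_le hα) (fun z hz => sub_nonneg.1 (hnonneg z hz)) hconv
    (left_mem_Icc.2 hab.le) (right_mem_Icc.2 hab.le) (fun i _ => Ioo_subset_Icc_self (hl i))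
    (fun i _ => (hp i).1.le) hsum
end
end

section
/- Let α ≥ 1 be a real number, let a < b be reals, and let u ∈ I_{α,[a,b]} be (Lebesgue) integrable on [a,b]. Then (1/(b−a))·∫_a^b u(x) dx ≥ (1/(α+1))·u(a) + (α/(α+1))·u(b). (Equivalently: the uniform distribution on [a,b] dominates, in the α,[a,b]-concave stochastic order, the two-point lottery giving a with probability 1/(α+1) and b with probability α/(α+1).) -/
open MeasureTheory Set

noncomputable section

/-!
The deficit `v x = u b - u x` vanishes at `b`, so the convex function `v ^ (1 / α)` lies below its
chord from `a` to `b`, that is, `v x ≤ ((b - x) / (b - a)) ^ α * v a`. Integrating this bound over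
`[a, b]` produces the factor `(b - a) / (α + 1)`.
-/

theorem lineMap_le_rpow_mul_of_convexOn_rpow {E : Type*} [AddCommGroup E] [Module ℝ E]
    {s : Set E} {v : E → ℝ} {α t : ℝ} {x z : E} (hα : 0 < α) (hv₀ : ∀ y ∈ s, 0 ≤ v y)
    (hv : ConvexOn ℝ s fun y ↦ v y ^ (1 / α)) (hx : x ∈ s) (hz : z ∈ s) (hvz : v z = 0)
    (ht : t ∈ Icc 0 1) : v (AffineMap.lineMap z x t) ≤ t ^ α * v x := by
  have hmem : AffineMap.lineMap z x t ∈ s := hv.1.lineMap_mem hz hx ht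
  have hroot : v (AffineMap.lineMap z x t) ^ (1 / α) ≤ t * v x ^ (1 / α) := by
    have h := hv.2 hz hx (sub_nonneg.2 ht.2) ht.1 (sub_add_cancel 1 t)
    simpa [AffineMap.lineMap_apply_module, hvz, Real.zero_rpow (inv_ne_zero hα.ne')] using h
  calc v (AffineMap.lineMap z x t)
      = (v (AffineMap.lineMap z x t) ^ (1 / α)) ^ α := by
        rw [one_div, Real.rpow_inv_rpow (hv₀ _ hmem) hα.ne']
    _ ≤ (t * v x ^ (1 / α)) ^ α :=
        Real.rpow_le_rpow (Real.rpow_nonneg (hv₀ _ hmem) _) hroot hα.le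
    _ = t ^ α * v x := by
        rw [Real.mul_rpow ht.1 (Real.rpow_nonneg (hv₀ x hx) _), one_div,
          Real.rpow_inv_rpow (hv₀ x hx) hα.ne']

theorem integral_sub_div_sub_rpow {α a b : ℝ} (hα : -1 < α) (hab : a ≠ b) :
    ∫ x in a..b, ((b - x) / (b - a)) ^ α = (b - a) / (α + 1) := by
  have hba : b - a ≠ 0 := sub_ne_zero.2 hab.symm
  simp_rw [sub_div _ _ (b - a)]
  rw [intervalIntegral.integral_comp_sub_div (fun y ↦ y ^ α) hba, sub_self, ← sub_div,
    div_self hba, integral_rpow (Or.inl hα), Real.one_rpow, Real.zero_rpow (by linarith),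
    sub_zero, smul_eq_mul, mul_one_div]

namespace AlphaConvexOn

variable {α a b : ℝ} {v : ℝ → ℝ}

theorem antitoneOn (hv : AlphaConvexOn α a b v) (hα : 0 < α) (hvb : v b = 0) :
    AntitoneOn v (Icc a b) := by
  intro x hx y hy hxy
  obtain ⟨t, ht, rfl⟩ : y ∈ AffineMap.lineMap b x '' Icc (0 : ℝ) 1 := by
    rw [← segment_eq_image_lineMap, segment_symm, segment_eq_Icc hx.2]
    exact ⟨hxy, hy.2⟩
  calc v (AffineMap.lineMap b x t)
      ≤ t ^ α * v x := lineMap_le_rpow_mul_of_convexOn_rpow hα hv.1 hv.2 hx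
        (right_mem_Icc.2 (hx.1.trans hx.2)) hvb ht
    _ ≤ v x := mul_le_of_le_one_left (hv.1 x hx) (Real.rpow_le_one ht.1 ht.2 hα.le)

theorem intervalIntegrable (hv : AlphaConvexOn α a b v) (hα : 0 < α) (hab : a ≤ b)
    (hvb : v b = 0) : IntervalIntegrable v volume a b :=
  AntitoneOn.intervalIntegrable (by simpa only [uIcc_of_le hab] using hv.antitoneOn hα hvb)

theorem le_sub_div_sub_rpow_mul (hv : AlphaConvexOn α a b v) (hα : 0 < α) (hab : a < b)
    (hvb : v b = 0) {x : ℝ} (hx : x ∈ Icc a b) :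
    v x ≤ ((b - x) / (b - a)) ^ α * v a := by
  have hba : 0 < b - a := sub_pos.2 hab
  have ht : (b - x) / (b - a) ∈ Icc (0 : ℝ) 1 :=
    ⟨div_nonneg (sub_nonneg.2 hx.2) hba.le, (div_le_one hba).2 (sub_le_sub_left hx.1 b)⟩
  have hx_eq : AffineMap.lineMap b a ((b - x) / (b - a)) = x := by
    rw [AffineMap.lineMap_apply_ring']
    field_simp
    ring
  simpa only [hx_eq] using lineMap_le_rpow_mul_of_convexOn_rpow hα hv.1 hv.2
    (left_mem_Icc.2 hab.le) (right_mem_Icc.2 hab.le) hvb ht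

theorem integral_le (hv : AlphaConvexOn α a b v) (hα : 0 < α) (hab : a < b) (hvb : v b = 0) :
    ∫ x in a..b, v x ≤ (b - a) / (α + 1) * v a := by
  have hcont : Continuous fun x ↦ ((b - x) / (b - a)) ^ α * v a :=
    (Continuous.rpow_const (by fun_prop) fun _ ↦ Or.inr hα.le).mul_const _
  calc ∫ x in a..b, v x
      ≤ ∫ x in a..b, ((b - x) / (b - a)) ^ α * v a :=
        intervalIntegral.integral_mono_on hab.le (hv.intervalIntegrable hα hab.le hvb)
          (hcont.intervalIntegrable a b) fun _ ↦ hv.le_sub_div_sub_rpow_mul hα hab hvb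
    _ = (b - a) / (α + 1) * v a := by
        rw [intervalIntegral.integral_mul_const,
          integral_sub_div_sub_rpow (by linarith) hab.ne]

end AlphaConvexOn

theorem stmt_2_general {α a b : ℝ} (hα : 0 < α) (hab : a < b) {u : ℝ → ℝ}
    (hu : AlphaConvexOn α a b fun x ↦ u b - u x) :
    (1 / (α + 1)) * u a + (α / (α + 1)) * u b ≤ (1 / (b - a)) * ∫ x in Icc a b, u x := by
  have hba : 0 < b - a := sub_pos.2 hab
  have hle : ∫ x in a..b, (u b - u x) ≤ (b - a) / (α + 1) * (u b - u a) :=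
    hu.integral_le hα hab (sub_self _)
  have hsplit : ∫ x in a..b, u x = (b - a) * u b - ∫ x in a..b, (u b - u x) := by
    have h := intervalIntegral.integral_sub (intervalIntegrable_const (c := u b))
      (hu.intervalIntegrable hα hab.le (sub_self _))
    simpa only [sub_sub_cancel, intervalIntegral.integral_const, smul_eq_mul] using h
  rw [integral_Icc_eq_integral_Ioc, ← intervalIntegral.integral_of_le hab.le, hsplit]
  calc 1 / (α + 1) * u a + α / (α + 1) * u b
      = 1 / (b - a) * ((b - a) * u b - (b - a) / (α + 1) * (u b - u a)) := by
        field_simp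
        ring
    _ ≤ 1 / (b - a) * ((b - a) * u b - ∫ x in a..b, (u b - u x)) := by gcongr

theorem stmt_2 (α a b : ℝ) (hα : 1 ≤ α) (hab : a < b) (u : ℝ → ℝ)
    (hu : MemI α a b u) (hint : IntegrableOn u (Icc a b)) :
    (1 / (α + 1)) * u a + (α / (α + 1)) * u b ≤ (1 / (b - a)) * ∫ x in Icc a b, u x :=
  stmt_2_general (zero_lt_one.trans_le hα) hab hu.2.2.2
end
end

section
/- Let a < b be reals and let 1 ≤ α < β be real numbers. Then I_{β,[a,b]} ⊆ I_{α,[a,b]}; that is, every function u : [a,b] → ℝ that is bounded, measurable, weakly increasing, and such that x ↦ u(b) − u(x) is β-convex, is also such that x ↦ u(b) − u(x) is α-convex. Consequently, if F dominates G in the α,[a,b]-concave stochastic order, then F dominates G in the β,[a,b]-concave stochastic order. -/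
/-!
As `v ^ (1 / α) = (v ^ (1 / β)) ^ (β / α)` and `t ↦ t ^ (β / α)` is increasing and convex on
`[0, ∞)` when `0 < α ≤ β`, every `β`-convex function is `α`-convex. A larger exponent thus leaves
fewer test functions, and the stochastic order becomes weaker.
-/

open MeasureTheory Set

noncomputable section

theorem convexOn_rpow_of_convexOn {E : Type*} [AddCommMonoid E] [SMul ℝ E] {s : Set E} {f : E → ℝ}
    {p : ℝ} (hf : ConvexOn ℝ s f) (hf₀ : ∀ x ∈ s, 0 ≤ f x) (hp : 1 ≤ p) :
    ConvexOn ℝ s (fun x => f x ^ p) := by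
  refine ⟨hf.1, fun x hx y hy t r ht hr htr => ?_⟩
  calc f (t • x + r • y) ^ p
      ≤ (t • f x + r • f y) ^ p :=
        Real.rpow_le_rpow (hf₀ _ (hf.1 hx hy ht hr htr)) (hf.2 hx hy ht hr htr)
          (zero_le_one.trans hp)
    _ ≤ t • f x ^ p + r • f y ^ p :=
        (convexOn_rpow hp).2 (hf₀ x hx) (hf₀ y hy) ht hr htr

theorem AlphaConvexOn.anti {α β a b : ℝ} {v : ℝ → ℝ} (hv : AlphaConvexOn β a b v)
    (hα : 0 < α) (hαβ : α ≤ β) : AlphaConvexOn α a b v := by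
  obtain ⟨hv₀, hconv⟩ := hv
  have hβ : β ≠ 0 := (hα.trans_le hαβ).ne'
  have rpow_eq : ∀ x ∈ Icc a b, (v x ^ (1 / β)) ^ (β / α) = v x ^ (1 / α) := fun x hx => by
    rw [← Real.rpow_mul (hv₀ x hx), div_mul_div_cancel₀ hβ]
  exact ⟨hv₀, (convexOn_rpow_of_convexOn hconv (fun x hx => Real.rpow_nonneg (hv₀ x hx) _)
    ((one_le_div hα).2 hαβ)).congr rpow_eq⟩

theorem MemI.anti {α β a b : ℝ} {u : ℝ → ℝ} (hu : MemI β a b u) (hα : 0 < α) (hαβ : α ≤ β) :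
    MemI α a b u :=
  let ⟨hbdd, hmeas, hmono, hconv⟩ := hu
  ⟨hbdd, hmeas, hmono, hconv.anti hα hαβ⟩

theorem ConcaveOrder.mono {α β a b : ℝ} {F G : Measure ℝ} (h : ConcaveOrder α a b F G)
    (hα : 0 < α) (hαβ : α ≤ β) : ConcaveOrder β a b F G :=
  fun u hu => h u (hu.anti hα hαβ)

theorem stmt_3_general (α β a b : ℝ) (hα : 0 < α) (hαβ : α ≤ β) :
    (∀ u : ℝ → ℝ, MemI β a b u → MemI α a b u) ∧
    (∀ F G : Measure ℝ, ConcaveOrder α a b F G → ConcaveOrder β a b F G) :=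
  ⟨fun _ hu => hu.anti hα hαβ, fun _ _ h => h.mono hα hαβ⟩

theorem stmt_3 (α β a b : ℝ) (hα : 1 ≤ α) (hαβ : α < β) (hab : a < b) :
    (∀ u : ℝ → ℝ, MemI β a b u → MemI α a b u) ∧
    (∀ F G : Measure ℝ, IsProbabilityMeasure F → IsProbabilityMeasure G →
      F (Icc a b)ᶜ = 0 → G (Icc a b)ᶜ = 0 →
      ConcaveOrder α a b F G → ConcaveOrder β a b F G) := by
  obtain ⟨memI, order⟩ := stmt_3_general α β a b (zero_lt_one.trans_le hα) hαβ.le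
  exact ⟨memI, fun F G _ _ _ _ => order F G⟩
end
end

section
/- Let α > 1 be a real number, let a < b be reals, and let u ∈ I_{α,[a,b]} be twice differentiable on [a,b] with a continuous second derivative (one-sided derivatives at the endpoints). Then u'(b) = 0. -/
open MeasureTheory Set

noncomputable section

/- The function `v x = u b - u x` vanishes at `b`, so convexity bounds `v ^ (1 / α)` by a multiple
of `b - x`. Hence `v` is `O((b - x) ^ α)`, which is `o(b - x)` because `1 < α`. -/

open Filter Asymptotics
open scoped Topology

theorem isLittleO_norm_rpow_id {E : Type*} [SeminormedAddCommGroup E] {r : ℝ} (hr : 1 < r) :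
    (fun x : E => ‖x‖ ^ r) =o[𝓝 0] fun x => x := by
  have hcont : Continuous fun x : E => ‖x‖ ^ (r - 1) :=
    continuous_norm.rpow_const fun _ => Or.inr (sub_pos.2 hr).le
  have hlim : Tendsto (fun x : E => ‖x‖ ^ (r - 1)) (𝓝 0) (𝓝 0) := by
    simpa [Real.zero_rpow (sub_pos.2 hr).ne'] using hcont.tendsto 0
  have hmul : (fun x : E => ‖x‖ ^ (r - 1) * ‖x‖) =o[𝓝 0] fun x => 1 * ‖x‖ :=
    ((isLittleO_one_iff ℝ).2 hlim).mul_isBigO (isBigO_refl _ _)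
  refine isLittleO_norm_right.1 (hmul.congr (fun x => ?_) fun x => one_mul _)
  rw [← Real.rpow_add_one' (norm_nonneg x) (by linarith), sub_add_cancel]

theorem hasFDerivWithinAt_zero_of_isBigO_rpow {𝕜 E F : Type*} [NontriviallyNormedField 𝕜]
    [NormedAddCommGroup E] [NormedSpace 𝕜 E] [NormedAddCommGroup F] [NormedSpace 𝕜 F]
    {f : E → F} {s : Set E} {x : E} {r : ℝ} (hr : 1 < r)
    (h : (fun y => f y - f x) =O[𝓝[s] x] fun y => ‖y - x‖ ^ r) :
    HasFDerivWithinAt f (0 : E →L[𝕜] F) s x := by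
  have hsub : Tendsto (fun y => y - x) (𝓝[s] x) (𝓝 0) :=
    (tendsto_sub_nhds_zero_iff.2 tendsto_id).mono_left nhdsWithin_le_nhds
  refine .of_isLittleO ?_
  simpa only [zero_apply, sub_zero, Function.comp_def] using
    h.trans_isLittleO ((isLittleO_norm_rpow_id hr).comp_tendsto hsub)

namespace AlphaConvexOn

variable {α a b : ℝ} {v : ℝ → ℝ}

theorem le_mul_rpow_of_eq_zero_right (hv : AlphaConvexOn α a b v) (hα : 0 < α) (hvb : v b = 0)
    {x : ℝ} (hx : x ∈ Icc a b) : v x ≤ v a * ((b - x) / (b - a)) ^ α := by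
  have ha : a ∈ Icc a b := left_mem_Icc.2 (hx.1.trans hx.2)
  have hb : b ∈ Icc a b := right_mem_Icc.2 (hx.1.trans hx.2)
  have hva : 0 ≤ v a := hv.1 a ha
  have hvx : 0 ≤ v x := hv.1 x hx
  have hratio : 0 ≤ (b - x) / (b - a) := div_nonneg (sub_nonneg.2 hx.2) (sub_nonneg.2 ha.2)
  rcases hx.2.eq_or_lt with rfl | hxb
  · rw [hvb]
    positivity
  have hab : a < b := hx.1.trans_lt hxb
  have hsecant : v a ^ (1 / α) / (a - b) ≤ v x ^ (1 / α) / (x - b) := by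
    simpa [hvb, Real.zero_rpow (inv_ne_zero hα.ne')] using
      hv.2.secant_mono hb ha hx hab.ne hxb.ne hx.1
  have hroot : v x ^ (1 / α) ≤ v a ^ (1 / α) * ((b - x) / (b - a)) := by
    rw [← neg_sub b a, ← neg_sub b x, div_neg, div_neg, neg_le_neg_iff,
      div_le_iff₀ (sub_pos.2 hxb)] at hsecant
    rwa [← mul_comm_div]
  calc
    v x = (v x ^ (1 / α)) ^ α := by rw [one_div, Real.rpow_inv_rpow hvx hα.ne']
    _ ≤ (v a ^ (1 / α) * ((b - x) / (b - a))) ^ α := by gcongr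
    _ = v a * ((b - x) / (b - a)) ^ α := by
      rw [Real.mul_rpow (by positivity) hratio, one_div, Real.rpow_inv_rpow hva hα.ne']

theorem isBigO_rpow_of_eq_zero_right (hv : AlphaConvexOn α a b v) (hα : 0 < α) (hvb : v b = 0) :
    v =O[𝓝[Icc a b] b] fun x => ‖x - b‖ ^ α := by
  refine .of_bound (v a / (b - a) ^ α) ?_
  filter_upwards [self_mem_nhdsWithin] with x hx
  have hab : 0 ≤ b - a := sub_nonneg.2 (hx.1.trans hx.2)
  have hxb : 0 ≤ b - x := sub_nonneg.2 hx.2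
  calc
    ‖v x‖ = v x := Real.norm_of_nonneg (hv.1 x hx)
    _ ≤ v a * ((b - x) / (b - a)) ^ α := hv.le_mul_rpow_of_eq_zero_right hα hvb hx
    _ = v a / (b - a) ^ α * (b - x) ^ α := by
      rw [Real.div_rpow hxb hab, mul_div_left_comm, mul_comm]
    _ = v a / (b - a) ^ α * ‖‖x - b‖ ^ α‖ := by
      rw [norm_sub_rev, Real.norm_of_nonneg hxb, Real.norm_of_nonneg (by positivity)]

theorem hasDerivWithinAt_zero_of_eq_zero_right (hv : AlphaConvexOn α a b v) (hα : 1 < α)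
    (hvb : v b = 0) : HasDerivWithinAt v 0 (Icc a b) b := by
  have hO := hv.isBigO_rpow_of_eq_zero_right (zero_lt_one.trans hα) hvb
  have hfderiv : HasFDerivWithinAt v (0 : ℝ →L[ℝ] ℝ) (Icc a b) b :=
    hasFDerivWithinAt_zero_of_isBigO_rpow hα (by simpa only [hvb, sub_zero] using hO)
  exact hfderiv.hasDerivWithinAt

end AlphaConvexOn

theorem stmt_6_general {α a b d : ℝ} (hα : 1 < α) (hab : a < b) {u : ℝ → ℝ}
    (hu : AlphaConvexOn α a b fun x => u b - u x) (hd : HasDerivWithinAt u d (Icc a b) b) :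
    d = 0 := by
  have hgap : HasDerivWithinAt (fun x => u b - u x) 0 (Icc a b) b :=
    hu.hasDerivWithinAt_zero_of_eq_zero_right hα (sub_self _)
  have hunique : UniqueDiffWithinAt ℝ (Icc a b) b := uniqueDiffOn_Icc hab b (right_mem_Icc.2 hab.le)
  exact neg_eq_zero.1 (hunique.eq_deriv _ (hd.const_sub (u b)) hgap)

theorem stmt_6 (α a b : ℝ) (hα : 1 < α) (hab : a < b) (u u' u'' : ℝ → ℝ)
    (hu : MemI α a b u)
    (hd1 : ∀ x ∈ Icc a b, HasDerivWithinAt u (u' x) (Icc a b) x)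
    (hd2 : ∀ x ∈ Icc a b, HasDerivWithinAt u' (u'' x) (Icc a b) x)
    (hc : ContinuousOn u'' (Icc a b)) :
    u' b = 0 :=
  stmt_6_general hα hab hu.2.2.2 (hd1 b (right_mem_Icc.2 hab.le))
end
end

section
/- Let a < b be reals and let F and G be Borel probability measures on [a,b], with cumulative distribution functions also denoted F and G. Then F ⪰_{2,[a,b]-S} G if and only if for every c ∈ [a,b] the following two inequalities hold: (1) (b−c)·[∫_a^c F(x)dx − ∫_a^c G(x)dx] + 2·∫_a^c (∫_a^x F(z)dz − ∫_a^x G(z)dz) dx ≤ 0; and (2) ∫_a^c (∫_a^x F(z)dz − ∫_a^x G(z)dz) dx ≤ 0. -/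
open MeasureTheory Set

noncomputable section

/-!
Write `y₊` for `max y 0`. For `c ≤ d`, `(c - x)₊ (d - x)₊ = (d - c) (c - x)₊ + (c - x)₊ ^ 2`, and
the integrals of `(c - x)₊` and of `(c - x)₊ ^ 2 / 2` against a measure concentrated on `[a, ∞)` are
the first and the second iterated integral of its distribution function from `a` to `c`. For fixed
`c` the defining inequality of the order is therefore affine in `d ∈ [c, b]`, so it holds for all
such `d` if and only if it holds at the endpoints `d = b` and `d = c`, which gives (1) and (2).
-/

theorem max_sub_mul_max_sub {c d : ℝ} (hcd : c ≤ d) (x : ℝ) :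
    max (c - x) 0 * max (d - x) 0 = (d - c) * max (c - x) 0 + max (c - x) 0 ^ 2 := by
  rcases le_total c x with hcx | hxc
  · simp [max_eq_right (sub_nonpos.2 hcx)]
  · rw [max_eq_left (sub_nonneg.2 hxc), max_eq_left (sub_nonneg.2 (hxc.trans hcd))]
    ring

theorem hasDerivAt_max_zero_pow {n : ℕ} (hn : n ≠ 0) (y : ℝ) :
    HasDerivAt (fun y => max y 0 ^ (n + 1)) ((n + 1) * max y 0 ^ n) y := by
  refine hasDerivAt_of_hasDerivAt_of_ne' (f := fun y => max y 0 ^ (n + 1))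
    (g := fun y => (n + 1) * max y 0 ^ n) (x := 0) (fun z hz => ?_) (by fun_prop) (by fun_prop) y
  rcases hz.lt_or_gt with hneg | hpos
  · have heq : (fun y : ℝ => max y 0 ^ (n + 1)) =ᶠ[nhds z] fun _ => 0 := by
      filter_upwards [eventually_lt_nhds hneg] with w hw
      simp [max_eq_right_of_lt hw]
    simpa [max_eq_right_of_lt hneg, hn] using (hasDerivAt_const z (0 : ℝ)).congr_of_eventuallyEq heq
  · have heq : (fun y : ℝ => max y 0 ^ (n + 1)) =ᶠ[nhds z] fun y => y ^ (n + 1) := by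
      filter_upwards [eventually_gt_nhds hpos] with w hw
      rw [max_eq_left_of_lt hw]
    simpa [max_eq_left_of_lt hpos] using (hasDerivAt_pow (n + 1) z).congr_of_eventuallyEq heq

theorem integral_max_zero_pow {n : ℕ} (hn : n ≠ 0) (p q : ℝ) :
    ∫ y in p..q, max y 0 ^ n = (max q 0 ^ (n + 1) - max p 0 ^ (n + 1)) / (n + 1) := by
  have hint : IntervalIntegrable (fun y : ℝ => (n + 1) * max y 0 ^ n) volume p q :=
    Continuous.intervalIntegrable (by fun_prop) p q
  rw [eq_div_iff n.cast_add_one_ne_zero, mul_comm, ← intervalIntegral.integral_const_mul]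
  exact intervalIntegral.integral_eq_sub_of_hasDerivAt
    (fun y _ => hasDerivAt_max_zero_pow hn y) hint

section IteratedIntegralsOfCdf

variable {a c d : ℝ} {μ : Measure ℝ} [IsFiniteMeasure μ]

theorem monotone_cdfR : Monotone (cdfR μ) :=
  fun _ _ hxy => measureReal_mono (Iic_subset_Iic.2 hxy)

theorem continuous_integral_cdfR (a : ℝ) : Continuous fun t => ∫ z in a..t, cdfR μ z :=
  intervalIntegral.continuous_primitive (fun _ _ => monotone_cdfR.intervalIntegrable) a

theorem integrable_max_sub_pow (hμ : ∀ᵐ x ∂μ, a ≤ x) (c : ℝ) (n : ℕ) :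
    Integrable (fun x => max (c - x) 0 ^ n) μ := by
  refine Integrable.of_bound (by fun_prop) (max (c - a) 0 ^ n) ?_
  filter_upwards [hμ] with x hax
  rw [Real.norm_of_nonneg (by positivity)]
  gcongr

theorem intervalIntegral_integral_max_sub_pow (hμ : ∀ᵐ x ∂μ, a ≤ x) (hac : a ≤ c) {n : ℕ}
    (hn : n ≠ 0) :
    ∫ t in a..c, ∫ x, max (t - x) 0 ^ n ∂μ = (∫ x, max (c - x) 0 ^ (n + 1) ∂μ) / (n + 1) := by
  have hint : Integrable (Function.uncurry fun t x : ℝ => max (t - x) 0 ^ n)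
      ((volume.restrict (Ioc a c)).prod μ) := by
    refine Integrable.of_bound (by fun_prop) ((c - a) ^ n) ?_
    filter_upwards [Measure.quasiMeasurePreserving_fst.ae (ae_restrict_mem measurableSet_Ioc),
      Measure.quasiMeasurePreserving_snd.ae hμ] with ⟨t, x⟩ ht hax
    rw [Function.uncurry_apply_pair, Real.norm_of_nonneg (by positivity)]
    gcongr
    exact max_le (sub_le_sub ht.2 hax) (sub_nonneg.2 hac)
  rw [← uIoc_of_le hac] at hint
  rw [intervalIntegral_integral_swap hint, ← integral_div]
  refine integral_congr_ae ?_
  filter_upwards [hμ] with x hax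
  rw [intervalIntegral.integral_comp_sub_right (fun y => max y 0 ^ n), integral_max_zero_pow hn,
    max_eq_right (sub_nonpos.2 hax), zero_pow n.succ_ne_zero, sub_zero]

theorem integral_cdfR (hμ : ∀ᵐ x ∂μ, a ≤ x) (hac : a ≤ c) :
    ∫ t in a..c, cdfR μ t = ∫ x, max (c - x) 0 ∂μ := by
  have hint : Integrable (fun x => max (c - x) 0) μ := by
    simpa only [pow_one] using integrable_max_sub_pow hμ c 1
  have hbound : (fun x => max (c - x) 0) ≤ᵐ[μ] fun _ => c - a := by
    filter_upwards [hμ] with x hax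
    exact max_le (sub_le_sub_left hax c) (sub_nonneg.2 hac)
  have hlevel : ∀ s ∈ Ioc 0 (c - a), μ.real {x | s ≤ max (c - x) 0} = cdfR μ (c - s) := by
    intro s hs
    have hset : {x | s ≤ max (c - x) 0} = Iic (c - s) := by
      ext x
      simp [hs.1.not_ge, le_sub_comm]
    rw [hset]
    rfl
  symm
  calc ∫ x, max (c - x) 0 ∂μ
      = ∫ s in Ioc 0 (c - a), μ.real {x | s ≤ max (c - x) 0} :=
        hint.integral_eq_integral_Ioc_meas_le (.of_forall fun _ => le_max_right _ _) hbound
    _ = ∫ s in Ioc 0 (c - a), cdfR μ (c - s) := setIntegral_congr_fun measurableSet_Ioc hlevel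
    _ = ∫ s in 0..c - a, cdfR μ (c - s) :=
        (intervalIntegral.integral_of_le (sub_nonneg.2 hac)).symm
    _ = ∫ t in a..c, cdfR μ t := by
        rw [intervalIntegral.integral_comp_sub_left, sub_sub_cancel, sub_zero]

theorem integral_integral_cdfR (hμ : ∀ᵐ x ∂μ, a ≤ x) (hac : a ≤ c) :
    ∫ t in a..c, ∫ z in a..t, cdfR μ z = (∫ x, max (c - x) 0 ^ 2 ∂μ) / 2 := by
  have hinner : EqOn (fun t => ∫ z in a..t, cdfR μ z) (fun t => ∫ x, max (t - x) 0 ^ 1 ∂μ)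
      (uIcc a c) := by
    intro t ht
    rw [uIcc_of_le hac] at ht
    simpa only [pow_one] using integral_cdfR hμ ht.1
  rw [intervalIntegral.integral_congr hinner,
    intervalIntegral_integral_max_sub_pow hμ hac one_ne_zero]
  norm_num

theorem integral_max_sub_mul_max_sub (hμ : ∀ᵐ x ∂μ, a ≤ x) (hac : a ≤ c) (hcd : c ≤ d) :
    ∫ x, max (c - x) 0 * max (d - x) 0 ∂μ =
      (d - c) * (∫ t in a..c, cdfR μ t) + 2 * ∫ t in a..c, ∫ z in a..t, cdfR μ z := by
  have hint : Integrable (fun x => max (c - x) 0) μ := by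
    simpa only [pow_one] using integrable_max_sub_pow hμ c 1
  simp_rw [max_sub_mul_max_sub hcd]
  rw [integral_add (hint.const_mul _) (integrable_max_sub_pow hμ c 2), integral_const_mul,
    integral_cdfR hμ hac, integral_integral_cdfR hμ hac, mul_div_cancel₀ _ two_ne_zero]

theorem integral_max_sub_mul_max_sub_le_iff {F G : Measure ℝ} [IsFiniteMeasure F]
    [IsFiniteMeasure G] (hF : ∀ᵐ x ∂F, a ≤ x) (hG : ∀ᵐ x ∂G, a ≤ x) (hac : a ≤ c) (hcd : c ≤ d) :
    ∫ x, max (c - x) 0 * max (d - x) 0 ∂F ≤ ∫ x, max (c - x) 0 * max (d - x) 0 ∂G ↔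
      (d - c) * ((∫ x in a..c, cdfR F x) - ∫ x in a..c, cdfR G x) +
        2 * ∫ x in a..c, ((∫ z in a..x, cdfR F z) - ∫ z in a..x, cdfR G z) ≤ 0 := by
  rw [integral_max_sub_mul_max_sub hF hac hcd, integral_max_sub_mul_max_sub hG hac hcd,
    intervalIntegral.integral_sub ((continuous_integral_cdfR a).intervalIntegrable a c)
      ((continuous_integral_cdfR a).intervalIntegrable a c), ← sub_nonpos]
  ring_nf

end IteratedIntegralsOfCdf

theorem suffOrder_two_iff_forall_le {a b : ℝ} {F G : Measure ℝ} :
    SuffOrder 2 a b F G ↔ ∀ c ∈ Icc a b, ∀ d ∈ Icc c b,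
      ∫ x, max (c - x) 0 * max (d - x) 0 ∂F ≤ ∫ x, max (c - x) 0 * max (d - x) 0 ∂G := by
  simp only [SuffOrder, Fin.forall_fin_two, Fin.prod_univ_two]
  constructor
  · intro h c hc d hd
    exact h ![c, d] ⟨hc, hc.1.trans hd.1, hd.2⟩
  · rintro h c ⟨hc₀, hc₁⟩
    rcases le_total (c 0) (c 1) with hle | hle
    · exact h (c 0) hc₀ (c 1) ⟨hle, hc₁.2⟩
    · simpa only [mul_comm] using h (c 1) hc₁ (c 0) ⟨hle, hc₀.2⟩

theorem forall_mem_Icc_sub_mul_add_nonpos_iff {b c A B : ℝ} (hcb : c ≤ b) :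
    (∀ d ∈ Icc c b, (d - c) * A + B ≤ 0) ↔ (b - c) * A + B ≤ 0 ∧ B ≤ 0 := by
  constructor
  · intro h
    exact ⟨h b (right_mem_Icc.2 hcb), by simpa using h c (left_mem_Icc.2 hcb)⟩
  · rintro ⟨hb, hc⟩ d ⟨hcd, hdb⟩
    rcases le_total A 0 with hA | hA
    · exact add_nonpos (mul_nonpos_of_nonneg_of_nonpos (sub_nonneg.2 hcd) hA) hc
    · calc (d - c) * A + B ≤ (b - c) * A + B := by gcongr
        _ ≤ 0 := hb

theorem stmt_9_general (a b : ℝ) (F G : Measure ℝ) [IsFiniteMeasure F] [IsFiniteMeasure G]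
    (hF : ∀ᵐ x ∂F, a ≤ x) (hG : ∀ᵐ x ∂G, a ≤ x) :
    SuffOrder 2 a b F G ↔
      ∀ c ∈ Icc a b,
        (b - c) * ((∫ x in a..c, cdfR F x) - ∫ x in a..c, cdfR G x) +
            2 * ∫ x in a..c, ((∫ z in a..x, cdfR F z) - ∫ z in a..x, cdfR G z) ≤ 0 ∧
        (∫ x in a..c, ((∫ z in a..x, cdfR F z) - ∫ z in a..x, cdfR G z)) ≤ 0 := by
  rw [suffOrder_two_iff_forall_le]
  refine forall₂_congr fun c hc => ?_
  rw [forall₂_congr fun d hd => integral_max_sub_mul_max_sub_le_iff hF hG hc.1 hd.1,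
    forall_mem_Icc_sub_mul_add_nonpos_iff hc.2]
  exact and_congr_right' (smul_nonpos_iff_nonpos_of_pos_left (two_pos (α := ℝ)))

theorem stmt_9 (a b : ℝ) (hab : a < b)
    (F G : Measure ℝ) [IsProbabilityMeasure F] [IsProbabilityMeasure G]
    (hF : F (Icc a b)ᶜ = 0) (hG : G (Icc a b)ᶜ = 0) :
    SuffOrder 2 a b F G ↔
      ∀ c ∈ Icc a b,
        (b - c) * ((∫ x in a..c, cdfR F x) - ∫ x in a..c, cdfR G x) +
            2 * ∫ x in a..c, ((∫ z in a..x, cdfR F z) - ∫ z in a..x, cdfR G z) ≤ 0 ∧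
        (∫ x in a..c, ((∫ z in a..x, cdfR F z) - ∫ z in a..x, cdfR G z)) ≤ 0 :=
  stmt_9_general a b F G (Filter.Eventually.mono hF fun _ hx => hx.1)
    (Filter.Eventually.mono hG fun _ hx => hx.1)
end
end

section
/- Let a < b be reals, let μ be a Borel probability measure on [a,b] with cumulative distribution function F, and let c₁, c₂ ∈ [a,b] with c₁ ≤ c₂. Then ∫_{[a,b]} max{c₁−x,0}·max{c₂−x,0} dμ(x) = (c₂−c₁)·∫_a^{c₁} F(x)dx + 2·∫_a^{c₁} (∫_a^x F(z)dz) dx. -/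
open MeasureTheory Set

noncomputable section

/-!
The lower partial moments `Mₙ(c) = ∫_{y ≤ c} (c - y)ⁿ dμ(y)` satisfy `M₀ = F` and, by Fubini on the
triangle `y ≤ x ≤ c`, `∫_{x ≤ c} Mₙ(x) dx = Mₙ₊₁(c) / (n + 1)`, so iterated integrals of `F` are
moments. On `x ≤ c₁` the integrand is `(c₁ - x)(c₂ - x) = (c₂ - c₁)(c₁ - x) + (c₁ - x)²`, so its
integral is `(c₂ - c₁) M₁(c₁) + M₂(c₁)`.
-/

section Triangle

variable {α : Type*} [PartialOrder α] [TopologicalSpace α] [OrderClosedTopology α]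
  [SecondCountableTopology α] [MeasurableSpace α] [OpensMeasurableSpace α]

lemma measurableSet_triangle (c : α) : MeasurableSet {p : α × α | p.2 ≤ p.1 ∧ p.1 ≤ c} := by
  rw [ofPred_and]
  exact .inter (measurableSet_le measurable_snd measurable_fst) (measurable_fst measurableSet_Iic)

lemma setIntegral_Iic_setIntegral_Iic_swap {E : Type*} [NormedAddCommGroup E] [NormedSpace ℝ E]
    {ν μ : Measure α} [SFinite ν] [SFinite μ] {f : α → α → E} {c : α}
    (hf : IntegrableOn (Function.uncurry f) {p | p.2 ≤ p.1 ∧ p.1 ≤ c} (ν.prod μ)) :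
    ∫ x in Iic c, ∫ y in Iic x, f x y ∂μ ∂ν = ∫ y in Iic c, ∫ x in Icc y c, f x y ∂ν ∂μ := by
  let g : α → α → E := fun x y =>
    {p : α × α | p.2 ≤ p.1 ∧ p.1 ≤ c}.indicator (Function.uncurry f) (x, y)
  have hg_row (x : α) (hx : x ∈ Iic c) : g x = (Iic x).indicator (f x) := by
    ext y
    exact indicator_eq_indicator (by simp [mem_Iic.1 hx]) rfl
  have hg_row_zero (x : α) (hx : x ∉ Iic c) : g x = 0 := by
    ext y
    simp [g, mt mem_Iic.2 hx]
  have hg_column (y : α) : (fun x => g x y) = (Icc y c).indicator fun x => f x y := by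
    ext x
    exact indicator_eq_indicator (by simp) rfl
  calc ∫ x in Iic c, ∫ y in Iic x, f x y ∂μ ∂ν
      = ∫ x in Iic c, ∫ y, g x y ∂μ ∂ν :=
        setIntegral_congr_fun measurableSet_Iic fun x hx => by
          simp only [hg_row x hx, integral_indicator measurableSet_Iic]
    _ = ∫ x, ∫ y, g x y ∂μ ∂ν :=
        setIntegral_eq_integral_of_forall_compl_eq_zero fun x hx => by simp [hg_row_zero x hx]
    _ = ∫ y, ∫ x, g x y ∂ν ∂μ :=
        integral_integral_swap (hf.integrable_indicator (measurableSet_triangle c))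
    _ = ∫ y, ∫ x in Icc y c, f x y ∂ν ∂μ := by
        simp only [hg_column, integral_indicator measurableSet_Icc]
    _ = ∫ y in Iic c, ∫ x in Icc y c, f x y ∂ν ∂μ :=
        (setIntegral_eq_integral_of_forall_compl_eq_zero fun y hy => by
          simp [Icc_eq_empty (mt mem_Iic.2 hy)]).symm

end Triangle

lemma setIntegral_Icc_sub_pow {y c : ℝ} (hyc : y ≤ c) (n : ℕ) :
    ∫ x in Icc y c, (x - y) ^ n = (c - y) ^ (n + 1) / (n + 1) := by
  rw [integral_Icc_eq_integral_Ioc, ← intervalIntegral.integral_of_le hyc,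
    intervalIntegral.integral_comp_sub_right (fun t => t ^ n), integral_pow]
  simp

section VanishingBelow

variable {E : Type*} [NormedAddCommGroup E] [NormedSpace ℝ E] {f : ℝ → E} {a c : ℝ}

lemma setIntegral_Iic_eq_intervalIntegral (hac : a ≤ c) (hf : ∀ x < a, f x = 0) :
    ∫ x in Iic c, f x = ∫ x in a..c, f x := by
  rw [intervalIntegral.integral_of_le hac, ← integral_Icc_eq_integral_Ioc]
  refine setIntegral_eq_of_subset_of_forall_sdiff_eq_zero measurableSet_Iic Icc_subset_Iic_self
    fun x hx => hf x ?_
  by_contra! hax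
  exact hx.2 ⟨hax, hx.1⟩

lemma setIntegral_Iic_setIntegral_Iic_eq_intervalIntegral (hac : a ≤ c)
    (hf : ∀ x < a, f x = 0) :
    ∫ x in Iic c, ∫ z in Iic x, f z = ∫ x in a..c, ∫ z in a..x, f z := by
  have h_inner_zero (x : ℝ) (hx : x < a) : ∫ z in Iic x, f z = 0 :=
    setIntegral_eq_zero_of_forall_eq_zero fun z hz => hf z (lt_of_le_of_lt hz hx)
  rw [setIntegral_Iic_eq_intervalIntegral hac h_inner_zero]
  refine intervalIntegral.integral_congr fun x hx => ?_
  rw [uIcc_of_le hac] at hx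
  exact setIntegral_Iic_eq_intervalIntegral hx.1 hf

end VanishingBelow

/-- The lower partial moment `∫_{x ≤ c} (c - x) ^ n dμ(x)` of order `n` of `μ` below the target `c`.
Integrating over `Iic c`, rather than integrating `max (c - x) 0 ^ n` over `ℝ`, makes order `0` the
distribution function. -/
def lowerPartialMoment (μ : Measure ℝ) (n : ℕ) (c : ℝ) : ℝ :=
  ∫ x in Iic c, (c - x) ^ n ∂μ

section LowerPartialMoment

variable {μ : Measure ℝ} {n : ℕ} {c : ℝ}

lemma lowerPartialMoment_zero (μ : Measure ℝ) : lowerPartialMoment μ 0 = cdfR μ := by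
  ext c
  simp [lowerPartialMoment, cdfR, Measure.real]

lemma integrableOn_sub_pow_Iic [IsFiniteMeasure μ] {d : ℝ} (hμ : MemLp id n (μ.restrict (Iic d)))
    (hcd : c ≤ d) : IntegrableOn (fun x => (c - x) ^ n) (Iic c) μ := by
  have hsub : MemLp (fun x => c - x) n (μ.restrict (Iic c)) :=
    (memLp_const c).sub (hμ.mono_measure (Measure.restrict_mono_set μ (Iic_subset_Iic.2 hcd)))
  refine hsub.integrable_norm_pow'.mono' (by fun_prop) (.of_forall fun x => ?_)
  rw [norm_pow]

lemma integrableOn_triangle_sub_pow [SFinite μ]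
    (h : IntegrableOn (fun y => (c - y) ^ (n + 1)) (Iic c) μ) :
    IntegrableOn (fun p : ℝ × ℝ => (p.1 - p.2) ^ n) {p | p.2 ≤ p.1 ∧ p.1 ≤ c}
      (volume.prod μ) := by
  let T : Set (ℝ × ℝ) := {p | p.2 ≤ p.1 ∧ p.1 ≤ c}
  have hT : MeasurableSet T := measurableSet_triangle c
  let g : ℝ × ℝ → ℝ := T.indicator fun p => (p.1 - p.2) ^ n
  have hg_nonneg (p : ℝ × ℝ) : 0 ≤ g p :=
    indicator_nonneg (fun q hq => pow_nonneg (sub_nonneg.2 hq.1) n) p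
  have hg_column (y : ℝ) : (fun x => g (x, y)) = (Icc y c).indicator fun x => (x - y) ^ n := by
    ext x
    exact indicator_eq_indicator (by simp [T]) rfl
  have hg_integral (y : ℝ) :
      ∫ x, g (x, y) = (Iic c).indicator (fun y => (c - y) ^ (n + 1) / (n + 1)) y := by
    rw [hg_column, integral_indicator measurableSet_Icc]
    by_cases hy : y ∈ Iic c
    · rw [indicator_of_mem hy, setIntegral_Icc_sub_pow hy]
    · simp [mt mem_Iic.2 hy]
  have hg_meas : AEStronglyMeasurable g (volume.prod μ) :=
    (Measurable.indicator (by fun_prop) hT).aestronglyMeasurable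
  rw [← integrable_indicator_iff hT, integrable_prod_iff' hg_meas]
  constructor
  · refine .of_forall fun y => ?_
    rw [hg_column, integrable_indicator_iff measurableSet_Icc]
    exact (by fun_prop : Continuous fun x : ℝ => (x - y) ^ n).integrableOn_Icc
  · simp only [Real.norm_of_nonneg (hg_nonneg _), hg_integral]
    exact (integrable_indicator_iff measurableSet_Iic).2 (h.div_const _)

lemma setIntegral_Iic_lowerPartialMoment [SFinite μ]
    (h : IntegrableOn (fun y => (c - y) ^ (n + 1)) (Iic c) μ) :
    ∫ x in Iic c, lowerPartialMoment μ n x = lowerPartialMoment μ (n + 1) c / (n + 1) := by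
  calc ∫ x in Iic c, lowerPartialMoment μ n x
      = ∫ y in Iic c, (∫ x in Icc y c, (x - y) ^ n) ∂μ :=
        setIntegral_Iic_setIntegral_Iic_swap (integrableOn_triangle_sub_pow h)
    _ = ∫ y in Iic c, (c - y) ^ (n + 1) / (n + 1) ∂μ :=
        setIntegral_congr_fun measurableSet_Iic fun _ hy => setIntegral_Icc_sub_pow hy n
    _ = lowerPartialMoment μ (n + 1) c / (n + 1) := integral_div _ _

lemma integral_max_sub_mul_max_sub_s11 {c₁ c₂ : ℝ} (hc : c₁ ≤ c₂)
    (h₁ : IntegrableOn (fun x => c₁ - x) (Iic c₁) μ)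
    (h₂ : IntegrableOn (fun x => (c₁ - x) ^ 2) (Iic c₁) μ) :
    ∫ x, max (c₁ - x) 0 * max (c₂ - x) 0 ∂μ =
      (c₂ - c₁) * lowerPartialMoment μ 1 c₁ + lowerPartialMoment μ 2 c₁ := by
  calc ∫ x, max (c₁ - x) 0 * max (c₂ - x) 0 ∂μ
      = ∫ x in Iic c₁, max (c₁ - x) 0 * max (c₂ - x) 0 ∂μ := by
        refine (setIntegral_eq_integral_of_forall_compl_eq_zero fun x hx => ?_).symm
        rw [max_eq_right (sub_nonpos.2 (not_le.1 hx).le), zero_mul]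
    _ = ∫ x in Iic c₁, ((c₂ - c₁) * (c₁ - x) + (c₁ - x) ^ 2) ∂μ := by
        refine setIntegral_congr_fun measurableSet_Iic fun x (hx : x ≤ c₁) => ?_
        simp only [max_eq_left (sub_nonneg.2 hx), max_eq_left (sub_nonneg.2 (hx.trans hc))]
        ring
    _ = (c₂ - c₁) * lowerPartialMoment μ 1 c₁ + lowerPartialMoment μ 2 c₁ := by
        simp only [integral_add (h₁.const_mul _) h₂, integral_const_mul, lowerPartialMoment,
          pow_one]

end LowerPartialMoment

lemma cdfR_eq_zero_of_lt {a x : ℝ} {μ : Measure ℝ} (hμ : ∀ᵐ y ∂μ, a ≤ y) (hx : x < a) :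
    cdfR μ x = 0 := by
  have hnull : μ (Iic x) = 0 :=
    measure_mono_null (fun y (hy : y ≤ x) => not_le.2 (hy.trans_lt hx)) (ae_iff.1 hμ)
  rw [cdfR, hnull, ENNReal.toReal_zero]

theorem stmt_11_general {μ : Measure ℝ} [IsFiniteMeasure μ] {c₁ c₂ : ℝ}
    (hμ : MemLp id 2 (μ.restrict (Iic c₁))) (hc : c₁ ≤ c₂) :
    ∫ x, max (c₁ - x) 0 * max (c₂ - x) 0 ∂μ =
      (c₂ - c₁) * (∫ x in Iic c₁, cdfR μ x) + 2 * ∫ x in Iic c₁, ∫ z in Iic x, cdfR μ z := by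
  have h₁ {x : ℝ} (hx : x ≤ c₁) : IntegrableOn (fun y => (x - y) ^ 1) (Iic x) μ :=
    integrableOn_sub_pow_Iic (by simpa using hμ.mono_exponent one_le_two) hx
  have h₂ : IntegrableOn (fun y => (c₁ - y) ^ 2) (Iic c₁) μ := integrableOn_sub_pow_Iic hμ le_rfl
  have integral_cdfR {x : ℝ} (hx : x ≤ c₁) :
      ∫ z in Iic x, cdfR μ z = lowerPartialMoment μ 1 x := by
    rw [← lowerPartialMoment_zero, setIntegral_Iic_lowerPartialMoment (h₁ hx)]
    simp
  have integral_integral_cdfR :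
      ∫ x in Iic c₁, ∫ z in Iic x, cdfR μ z = lowerPartialMoment μ 2 c₁ / 2 := by
    rw [setIntegral_congr_fun measurableSet_Iic fun x hx => integral_cdfR hx,
      setIntegral_Iic_lowerPartialMoment h₂]
    norm_num
  rw [integral_max_sub_mul_max_sub_s11 hc (by simpa using h₁ le_rfl) h₂, integral_cdfR le_rfl,
    integral_integral_cdfR, mul_div_cancel₀ _ two_ne_zero]

theorem stmt_11 (a b : ℝ) (hab : a < b) (μ : Measure ℝ) [IsProbabilityMeasure μ]
    (hμ : μ (Icc a b)ᶜ = 0) (c₁ c₂ : ℝ) (hc₁ : c₁ ∈ Icc a b) (hc₂ : c₂ ∈ Icc a b)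
    (hc : c₁ ≤ c₂) :
    ∫ x in Icc a b, max (c₁ - x) 0 * max (c₂ - x) 0 ∂μ =
      (c₂ - c₁) * (∫ x in a..c₁, cdfR μ x) +
        2 * ∫ x in a..c₁, ∫ z in a..x, cdfR μ z := by
  have hsupp : ∀ᵐ x ∂μ, x ∈ Icc a b := hμ
  have hL2 : MemLp id 2 μ := memLp_of_bounded hsupp aestronglyMeasurable_id 2
  have hcdf (x : ℝ) (hx : x < a) : cdfR μ x = 0 :=
    cdfR_eq_zero_of_lt (hsupp.mono fun _ hy => hy.1) hx
  rw [Measure.restrict_eq_self_of_ae_mem hsupp, stmt_11_general (hL2.restrict _) hc,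
    setIntegral_Iic_eq_intervalIntegral hc₁.1 hcdf,
    setIntegral_Iic_setIntegral_Iic_eq_intervalIntegral hc₁.1 hcdf]
end
end

section
/- Let a < b be reals and let u : [a,b] → ℝ be continuous, convex, weakly decreasing, with u(b) = 0. Then for every ε > 0 there exist a positive integer m, nonnegative reals γ₁,…,γ_m, and points c₁,…,c_m ∈ [a,b] such that sup_{x ∈ [a,b]} |u(x) − ∑_{j=1}^m γ_j·max{c_j − x, 0}| ≤ ε. That is, u is the uniform limit of a sequence of nonnegative linear combinations of functions of the form x ↦ max{c − x, 0} with c ∈ [a,b]. -/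
open MeasureTheory Set

noncomputable section

/-!
Interpolate `u` at nodes `b = t 0 > t 1 > ⋯ > t n = a` by the continuous function that is affine
between consecutive nodes. This interpolant is a sum of hinges `max (t k - x) 0`, the weight at
`t k` being the increase in steepness there as one moves left. Convexity makes these weights
nonnegative; at `t 0` it is monotonicity that does so. Both `u` and the interpolant are then
antitone and they agree at the nodes, so their distance is at most the oscillation of `u` between
neighbouring nodes, which uniform continuity makes small.
-/

section Interpolation

variable {𝕜 : Type*} [Field 𝕜] {u : 𝕜 → 𝕜} {t : ℕ → 𝕜}

/-- The negated slope of the piecewise affine interpolant of `u` at decreasing nodes `t`, between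
`t k` and `t (k - 1)`. The value `0` at `k = 0` is the steepness to the right of `t 0`, where the
interpolant is constant. -/
def steepness (u : 𝕜 → 𝕜) (t : ℕ → 𝕜) : ℕ → 𝕜
  | 0 => 0
  | k + 1 => -slope u (t (k + 1)) (t k)

/-- The change of slope at the node `t k` of the piecewise affine interpolant of `u` at decreasing
nodes `t`; it is the weight of the hinge with corner `t k`. -/
def kinkWeight (u : 𝕜 → 𝕜) (t : ℕ → 𝕜) (k : ℕ) : 𝕜 :=
  steepness u t (k + 1) - steepness u t k

lemma steepness_succ_mul (u : 𝕜 → 𝕜) (t : ℕ → 𝕜) (k : ℕ) :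
    steepness u t (k + 1) * (t k - t (k + 1)) = u (t (k + 1)) - u (t k) := by
  have h : (t k - t (k + 1)) * slope u (t (k + 1)) (t k) = u (t k) - u (t (k + 1)) :=
    sub_smul_slope u (t (k + 1)) (t k)
  rw [steepness]
  linear_combination -h

lemma sum_kinkWeight (u : 𝕜 → 𝕜) (t : ℕ → 𝕜) (n : ℕ) :
    ∑ k ∈ Finset.range n, kinkWeight u t k = steepness u t n :=
  (Finset.sum_range_sub (steepness u t) n).trans (sub_zero _)

lemma sum_kinkWeight_mul_sub (u : 𝕜 → 𝕜) (t : ℕ → 𝕜) (n : ℕ) :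
    ∑ k ∈ Finset.range n, kinkWeight u t k * (t k - t n) = u (t n) - u (t 0) := by
  induction n with
  | zero => simp
  | succ n ih =>
    calc ∑ k ∈ Finset.range (n + 1), kinkWeight u t k * (t k - t (n + 1))
        = ∑ k ∈ Finset.range (n + 1), kinkWeight u t k * (t k - t n)
          + (∑ k ∈ Finset.range (n + 1), kinkWeight u t k) * (t n - t (n + 1)) := by
          rw [Finset.sum_mul, ← Finset.sum_add_distrib]
          exact Finset.sum_congr rfl fun k _ => by ring
      _ = (u (t n) - u (t 0)) + (u (t (n + 1)) - u (t n)) := by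
          rw [sum_kinkWeight, steepness_succ_mul, Finset.sum_range_succ, ih, sub_self, mul_zero,
            add_zero]
      _ = u (t (n + 1)) - u (t 0) := by ring

variable [LinearOrder 𝕜]

/-- The piecewise affine interpolant of `u` at decreasing nodes `t 0, …, t n`, written as a
combination of hinges so that the signs of the weights can be read off. -/
def hingeInterpolant (u : 𝕜 → 𝕜) (t : ℕ → 𝕜) (n : ℕ) (x : 𝕜) : 𝕜 :=
  u (t 0) + ∑ k ∈ Finset.range n, kinkWeight u t k * max (t k - x) 0

variable [IsStrictOrderedRing 𝕜]

lemma hingeInterpolant_node (u : 𝕜 → 𝕜) (ht : Antitone t) {n j : ℕ} (hj : j ≤ n) :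
    hingeInterpolant u t n (t j) = u (t j) := by
  have hleft : ∀ k ∈ Finset.range j,
      kinkWeight u t k * max (t k - t j) 0 = kinkWeight u t k * (t k - t j) := fun k hk => by
    rw [max_eq_left (sub_nonneg.2 (ht (Finset.mem_range.1 hk).le))]
  have hright : ∀ k ∈ Finset.range n, k ∉ Finset.range j →
      kinkWeight u t k * max (t k - t j) 0 = 0 := fun k _ hk => by
    rw [max_eq_right (sub_nonpos.2 (ht (not_lt.1 (mt Finset.mem_range.2 hk)))), mul_zero]
  rw [hingeInterpolant, ← Finset.sum_subset (Finset.range_subset_range.2 hj) hright,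
    Finset.sum_congr rfl hleft, sum_kinkWeight_mul_sub, add_sub_cancel]

lemma kinkWeight_nonneg {s : Set 𝕜} (hconv : ConvexOn 𝕜 s u) (hdec : AntitoneOn u s)
    (ht : StrictAnti t) {k : ℕ} (hmem : ∀ i ≤ k + 1, t i ∈ s) : 0 ≤ kinkWeight u t k := by
  cases k with
  | zero =>
    have hslope : slope u (t 1) (t 0) ≤ 0 := by
      have hlt : t 1 < t 0 := ht zero_lt_one
      rw [slope_def_field]
      exact div_nonpos_of_nonpos_of_nonneg
        (sub_nonpos.2 (hdec (hmem 1 le_rfl) (hmem 0 zero_le_one) hlt.le)) (sub_pos.2 hlt).le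
    simpa only [kinkWeight, steepness, sub_zero] using neg_nonneg.2 hslope
  | succ k =>
    have hslope : slope u (t (k + 2)) (t (k + 1)) ≤ slope u (t (k + 1)) (t k) := by
      rw [slope_def_field, slope_def_field]
      exact hconv.slope_mono_adjacent (hmem (k + 2) le_rfl) (hmem k (by lia))
        (ht (k + 1).lt_succ_self) (ht k.lt_succ_self)
    exact sub_nonneg.2 (neg_le_neg hslope)

lemma antitone_hingeInterpolant {n : ℕ} (hweight : ∀ k < n, 0 ≤ kinkWeight u t k) :
    Antitone (hingeInterpolant u t n) := by
  intro x y hxy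
  unfold hingeInterpolant
  gcongr with k hk
  exact hweight k (Finset.mem_range.1 hk)

end Interpolation

lemma exists_lt_mem_Icc_succ {α : Type*} [LinearOrder α] {t : ℕ → α} {n : ℕ} (hn : 0 < n) {x : α}
    (hx : x ∈ Icc (t n) (t 0)) : ∃ k < n, x ∈ Icc (t (k + 1)) (t k) := by
  induction n, hn using Nat.le_induction with
  | base => exact ⟨0, zero_lt_one, hx⟩
  | succ n _ ih =>
    rcases le_total x (t n) with hxn | hnx
    · exact ⟨n, n.lt_succ_self, hx.1, hxn⟩
    · obtain ⟨k, hk, hxk⟩ := ih ⟨hnx, hx.2⟩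
      exact ⟨k, hk.trans n.lt_succ_self, hxk⟩

lemma abs_sub_le_of_antitoneOn_Icc {α G : Type*} [Preorder α] [AddCommGroup G] [LinearOrder G]
    [IsOrderedAddMonoid G] {f g : α → G} {l r x : α} (hf : AntitoneOn f (Icc l r))
    (hg : AntitoneOn g (Icc l r)) (hl : g l = f l) (hr : g r = f r) (hx : x ∈ Icc l r) :
    |f x - g x| ≤ f l - f r := by
  have hlr : l ≤ r := hx.1.trans hx.2
  have hlmem : l ∈ Icc l r := left_mem_Icc.2 hlr
  have hrmem : r ∈ Icc l r := right_mem_Icc.2 hlr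
  exact abs_sub_le_of_le_of_le (hf hx hrmem hx.2) (hf hlmem hx hx.1)
    (hr ▸ hg hx hrmem hx.2) (hl ▸ hg hlmem hx hx.1)

lemma abs_sub_hingeInterpolant_le {𝕜 : Type*} [Field 𝕜] [LinearOrder 𝕜] [IsStrictOrderedRing 𝕜]
    {u : 𝕜 → 𝕜} {t : ℕ → 𝕜} {n : ℕ} {ε x : 𝕜} (hdec : AntitoneOn u (Icc (t n) (t 0)))
    (ht : Antitone t) (hn : 0 < n) (hweight : ∀ k < n, 0 ≤ kinkWeight u t k)
    (hosc : ∀ k < n, |u (t (k + 1)) - u (t k)| ≤ ε) (hx : x ∈ Icc (t n) (t 0)) :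
    |u x - hingeInterpolant u t n x| ≤ ε := by
  obtain ⟨k, hk, hxk⟩ := exists_lt_mem_Icc_succ hn hx
  have hcell : Icc (t (k + 1)) (t k) ⊆ Icc (t n) (t 0) := Icc_subset_Icc (ht hk) (ht k.zero_le)
  calc |u x - hingeInterpolant u t n x|
      ≤ u (t (k + 1)) - u (t k) :=
        abs_sub_le_of_antitoneOn_Icc (hdec.mono hcell)
          ((antitone_hingeInterpolant hweight).antitoneOn _)
          (hingeInterpolant_node u ht hk) (hingeInterpolant_node u ht hk.le) hxk
    _ ≤ ε := (le_abs_self _).trans (hosc k hk)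

lemma exists_strictAnti_nodes_dist_lt {X : Type*} [PseudoMetricSpace X] {f : ℝ → X} {a b ε : ℝ}
    (hab : a < b) (hf : ContinuousOn f (Icc a b)) (hε : 0 < ε) :
    ∃ n > 0, ∃ t : ℕ → ℝ, StrictAnti t ∧ t n = a ∧ t 0 = b ∧
      ∀ k < n, dist (f (t (k + 1))) (f (t k)) < ε := by
  obtain ⟨δ, hδ, hfδ⟩ := Metric.uniformContinuousOn_iff.1
    (isCompact_Icc.uniformContinuousOn_of_continuous hf) ε hε
  have hba : 0 < b - a := sub_pos.2 hab
  obtain ⟨n, hn⟩ := exists_nat_one_div_lt (div_pos hδ hba)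
  set mesh : ℝ := (b - a) / (n + 1) with hmesh
  have hmesh_pos : 0 < mesh := by positivity
  have hmesh_lt : mesh < δ := by
    rwa [lt_div_iff₀ hba, one_div_mul_eq_div] at hn
  set t : ℕ → ℝ := fun k => b - k * mesh with ht_def
  have ht : StrictAnti t := fun i j hij =>
    sub_lt_sub_left (mul_lt_mul_of_pos_right (Nat.cast_lt.2 hij) hmesh_pos) b
  have ht_last : t (n + 1) = a := by
    simp only [ht_def, hmesh]
    push_cast
    field_simp
    ring
  have ht_zero : t 0 = b := by simp [ht_def]
  have hmem : ∀ k ≤ n + 1, t k ∈ Icc a b := fun k hk =>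
    ⟨ht_last ▸ ht.antitone hk, ht_zero ▸ ht.antitone k.zero_le⟩
  refine ⟨n + 1, n.succ_pos, t, ht, ht_last, ht_zero, fun k hk =>
    hfδ _ (hmem (k + 1) hk) _ (hmem k hk.le) ?_⟩
  have hstep : t (k + 1) - t k = -mesh := by
    simp only [ht_def]
    push_cast
    ring
  rwa [Real.dist_eq, hstep, abs_neg, abs_of_pos hmesh_pos]

theorem stmt_13 (a b : ℝ) (hab : a < b) (u : ℝ → ℝ)
    (hcont : ContinuousOn u (Icc a b)) (hconv : ConvexOn ℝ (Icc a b) u)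
    (hdec : AntitoneOn u (Icc a b)) (hub : u b = 0) :
    ∀ ε > (0:ℝ), ∃ m : ℕ, 0 < m ∧ ∃ γ c : Fin m → ℝ,
      (∀ j, 0 ≤ γ j) ∧ (∀ j, c j ∈ Icc a b) ∧
      ∀ x ∈ Icc a b, |u x - ∑ j, γ j * max (c j - x) 0| ≤ ε := by
  intro ε hε
  obtain ⟨n, hn, t, ht, rfl, rfl, hosc⟩ := exists_strictAnti_nodes_dist_lt hab hcont hε
  have hmem : ∀ k ≤ n, t k ∈ Icc (t n) (t 0) := fun k hk =>
    ⟨ht.antitone hk, ht.antitone k.zero_le⟩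
  have hweight : ∀ k < n, 0 ≤ kinkWeight u t k := fun k hk =>
    kinkWeight_nonneg hconv hdec ht fun i hi => hmem i (hi.trans hk)
  refine ⟨n, hn, fun k => kinkWeight u t k, fun k => t k, fun k => hweight k k.2,
    fun k => hmem k k.2.le, fun x hx => ?_⟩
  have hsum : ∑ k : Fin n, kinkWeight u t k * max (t k - x) 0 = hingeInterpolant u t n x := by
    rw [hingeInterpolant, hub, zero_add, Finset.sum_range]
  rw [hsum]
  exact abs_sub_hingeInterpolant_le hdec ht.antitone hn hweight (fun k hk => (hosc k hk).le) hx
end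
end

section
/- Let x₁ ≤ x₂ ≤ x₃ ≤ x₄ be reals with x₁ < x₄, and let p, q ∈ [0,1]. Let μ_X = p·δ_{x₁} + (1−p)·δ_{x₃} and μ_Y = q·δ_{x₂} + (1−q)·δ_{x₄} (mixtures of Dirac measures). Assume p·x₁ + (1−p)·x₃ ≥ q·x₂ + (1−q)·x₄, i.e., the mean of μ_X is at least the mean of μ_Y. Then μ_Y ⪰_{2,[x₁,x₄]-I} μ_X if and only if p·(x₄−x₁)² + (1−p)·(x₄−x₃)² ≥ q·(x₄−x₂)². -/
open MeasureTheory Set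

noncomputable section

/-!
For any law `μ` on `[a, b]`, write `T = b - X` with `X ∼ μ`, put `t = b - c`, and let
`v = u b - u`, so that `v b = 0` and `v ^ (1 / α)` is convex. The claim is `q * v c ≤ 𝔼 v(X)`, given
the two moment bounds `𝔼 T ≤ q * t` (the comparison of means) and `q * t ^ α ≤ 𝔼 T ^ α` (the test
function `u x = -(b - x) ^ α`). It is enough to find `A, B ≥ 0` such that
`A * (b - x) ^ α - B * (b - x)` lies below `v x` and touches it at `x = c`. Raising a support line
of `v ^ (1 / α)` at `c` to the power `α ≥ 2` produces them. At the endpoint `c = a` there may be no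
support line, but there the two moment bounds force `T ∈ {0, t}` almost surely, and `B = 0` works.
-/

section Inequalities

variable {α : ℝ}

lemma convexOn_add_mul_sub_le_of_hasDerivAt {s : Set ℝ} {f : ℝ → ℝ} {f' x y : ℝ}
    (hf : ConvexOn ℝ s f) (hx : x ∈ s) (hy : y ∈ s) (hf' : HasDerivAt f f' y) :
    f y + f' * (x - y) ≤ f x := by
  rcases lt_trichotomy x y with hxy | rfl | hyx
  · have hslope := hf.slope_le_of_hasDerivAt hx hy hxy hf'
    rw [slope_def_field, div_le_iff₀ (sub_pos.2 hxy)] at hslope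
    linarith
  · simp
  · have hslope := hf.le_slope_of_hasDerivAt hy hx hyx hf'
    rw [slope_def_field, le_div_iff₀ (sub_pos.2 hyx)] at hslope
    linarith

lemma convexOn_exists_add_mul_sub_le {s : Set ℝ} {f : ℝ → ℝ} {c : ℝ} (hf : ConvexOn ℝ s f)
    (hc : c ∈ interior s) : ∃ m, ∀ x ∈ s, f c + m * (x - c) ≤ f x := by
  refine ⟨derivWithin f (Ioi c) c, fun x hx => ?_⟩
  rcases lt_trichotomy x c with hxc | rfl | hcx
  · have hslope := (hf.slope_le_leftDeriv_of_mem_interior hx hc hxc).trans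
      (hf.leftDeriv_le_rightDeriv_of_mem_interior hc)
    rw [slope_def_field, div_le_iff₀ (sub_pos.2 hxc)] at hslope
    linarith
  · simp
  · have hslope := hf.rightDeriv_le_slope_of_mem_interior hc hx hcx
    rw [slope_def_field, le_div_iff₀ (sub_pos.2 hcx)] at hslope
    linarith

lemma rpow_add_mul_rpow_sub_one_mul_sub_le {x y : ℝ} (hα : 1 ≤ α) (hx : 0 ≤ x) (hy : 0 ≤ y) :
    y ^ α + α * y ^ (α - 1) * (x - y) ≤ x ^ α :=
  convexOn_add_mul_sub_le_of_hasDerivAt (convexOn_rpow hα) hx hy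
    (Real.hasDerivAt_rpow_const (Or.inr hα))

lemma rpow_sub_self_le_mul_rpow_sub_rpow_sub_one {t : ℝ} (hα : 2 ≤ α) (ht : 0 ≤ t) :
    t ^ α - t ≤ (α - 1) * (t ^ α - t ^ (α - 1)) := by
  have hα1 : 0 < α - 1 := by linarith
  have hw : 0 ≤ (α - 2) / (α - 1) := div_nonneg (by linarith) hα1.le
  have hexp : α * ((α - 2) / (α - 1)) + 1 / (α - 1) = α - 1 := by field_simp; ring
  have amgm := Real.geom_mean_le_arith_mean2_weighted hw (one_div_nonneg.2 hα1.le)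
    (Real.rpow_nonneg ht α) ht (by field_simp; ring)
  rw [← Real.rpow_mul ht, ← Real.rpow_add_of_nonneg ht (by positivity) (by positivity), hexp]
    at amgm
  have hscale : (α - 1) * ((α - 2) / (α - 1) * t ^ α + 1 / (α - 1) * t) = (α - 2) * t ^ α + t := by
    field_simp
  linarith [mul_le_mul_of_nonneg_left amgm hα1.le]

lemma rpow_mul_add_mul_rpow_sub_self_le {W D t w : ℝ} (hα : 2 ≤ α) (hW : 0 ≤ W) (hD : 0 ≤ D)
    (ht : 0 ≤ t) (hw : 0 ≤ w) (hle : W * t + D * (t - 1) ≤ w) :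
    W ^ α * t ^ α + α / (α - 1) * W ^ (α - 1) * D * (t ^ α - t) ≤ w ^ α := by
  have hα1 : 0 < α - 1 := by linarith
  have htpow : t ^ (α - 1) * (t - 1) = t ^ α - t ^ (α - 1) := by
    rw [mul_sub, mul_one, ← Real.rpow_add_one' ht (by linarith), sub_add_cancel]
  calc W ^ α * t ^ α + α / (α - 1) * W ^ (α - 1) * D * (t ^ α - t)
      ≤ W ^ α * t ^ α + α / (α - 1) * W ^ (α - 1) * D * ((α - 1) * (t ^ α - t ^ (α - 1))) := by
        gcongr
        exact rpow_sub_self_le_mul_rpow_sub_rpow_sub_one hα ht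
    _ = (W * t) ^ α + α * (W * t) ^ (α - 1) * (D * (t - 1)) := by
        rw [Real.mul_rpow hW ht, Real.mul_rpow hW ht, ← htpow]
        field_simp
    _ ≤ (W * t) ^ α + α * (W * t) ^ (α - 1) * (w - W * t) := by
        gcongr
        linarith
    _ ≤ w ^ α := rpow_add_mul_rpow_sub_one_mul_sub_le (by linarith) hw (by positivity)

lemma eq_zero_or_eq_of_rpow_eq_rpow_sub_one_mul {l s : ℝ} (hα : 1 < α) (hs : 0 ≤ s) (hl : 0 ≤ l)
    (h : s ^ α = l ^ (α - 1) * s) : s = 0 ∨ s = l := by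
  refine or_iff_not_imp_left.2 fun hs0 => ?_
  rw [← sub_add_cancel α 1, Real.rpow_add_one hs0, add_sub_cancel_right] at h
  exact (Real.rpow_left_inj hs hl (by linarith)).1 (mul_right_cancel₀ hs0 h)

lemma rpow_le_rpow_sub_one_mul {l s : ℝ} (hα : 1 ≤ α) (hs : 0 ≤ s) (hsl : s ≤ l) :
    s ^ α ≤ l ^ (α - 1) * s := by
  rw [← sub_add_cancel α 1, Real.rpow_add_one' hs (by linarith), add_sub_cancel_right]
  gcongr

end Inequalities

section Moments

variable {Ω : Type*} [MeasurableSpace Ω] {μ : Measure Ω} {T V : Ω → ℝ} {α : ℝ}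

lemma ae_eq_zero_or_eq_of_mul_integral_le_integral_rpow {l : ℝ} (hα : 1 < α) (hl : 0 ≤ l)
    (hT : ∀ᵐ ω ∂μ, T ω ∈ Icc 0 l) (hTi : Integrable T μ)
    (hTαi : Integrable (fun ω => T ω ^ α) μ)
    (hle : l ^ (α - 1) * ∫ ω, T ω ∂μ ≤ ∫ ω, T ω ^ α ∂μ) :
    ∀ᵐ ω ∂μ, T ω = 0 ∨ T ω = l := by
  have hpt : (fun ω => T ω ^ α) ≤ᵐ[μ] fun ω => l ^ (α - 1) * T ω :=
    hT.mono fun ω hω => rpow_le_rpow_sub_one_mul hα.le hω.1 hω.2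
  have heq : ∫ ω, T ω ^ α ∂μ = ∫ ω, l ^ (α - 1) * T ω ∂μ :=
    (integral_mono_ae hTαi (hTi.const_mul _) hpt).antisymm (by rwa [integral_const_mul])
  filter_upwards [hT, (integral_eq_iff_of_ae_le hTαi (hTi.const_mul _) hpt).1 heq] with ω hω hωeq
  exact eq_zero_or_eq_of_rpow_eq_rpow_sub_one_mul hα hω.1 hl hωeq

lemma mul_le_integral_of_rpow_sub_mul_le {A B q t : ℝ} (hA : 0 ≤ A) (hB : 0 ≤ B)
    (hTi : Integrable T μ) (hTαi : Integrable (fun ω => T ω ^ α) μ) (hVi : Integrable V μ)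
    (hle : ∀ᵐ ω ∂μ, A * T ω ^ α - B * T ω ≤ V ω)
    (hmean : ∫ ω, T ω ∂μ ≤ q * t) (hmoment : q * t ^ α ≤ ∫ ω, T ω ^ α ∂μ) :
    q * (A * t ^ α - B * t) ≤ ∫ ω, V ω ∂μ :=
  calc q * (A * t ^ α - B * t) = A * (q * t ^ α) - B * (q * t) := by ring
    _ ≤ A * ∫ ω, T ω ^ α ∂μ - B * ∫ ω, T ω ∂μ := by gcongr
    _ = ∫ ω, (A * T ω ^ α - B * T ω) ∂μ := by
        rw [integral_sub (hTαi.const_mul A) (hTi.const_mul B), integral_const_mul,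
          integral_const_mul]
    _ ≤ ∫ ω, V ω ∂μ := integral_mono_ae ((hTαi.const_mul A).sub (hTi.const_mul B)) hVi hle

end Moments

section IntervalMoments

variable {α a b q : ℝ} {μ : Measure ℝ}

lemma integrable_sub_rpow_of_ae_mem_Icc [IsFiniteMeasure μ] (hα : 0 ≤ α)
    (hμ : ∀ᵐ x ∂μ, x ∈ Icc a b) : Integrable (fun x => (b - x) ^ α) μ := by
  refine Integrable.of_mem_Icc 0 ((b - a) ^ α) (by fun_prop) (hμ.mono fun x hx => ?_)
  have hbx : 0 ≤ b - x := sub_nonneg.2 hx.2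
  exact ⟨by positivity, by gcongr; exact hx.1⟩

lemma integrable_sub_of_ae_mem_Icc [IsFiniteMeasure μ] (hμ : ∀ᵐ x ∂μ, x ∈ Icc a b) :
    Integrable (fun x => b - x) μ := by
  simpa using integrable_sub_rpow_of_ae_mem_Icc zero_le_one hμ

lemma ae_eq_left_or_eq_right_of_moment_bounds [IsFiniteMeasure μ] (hα : 1 < α) (hab : a < b)
    (hμ : ∀ᵐ x ∂μ, x ∈ Icc a b) (hmean : ∫ x, (b - x) ∂μ ≤ q * (b - a))
    (hmoment : q * (b - a) ^ α ≤ ∫ x, (b - x) ^ α ∂μ) :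
    ∀ᵐ x ∂μ, x = a ∨ x = b := by
  have hba : 0 < b - a := sub_pos.2 hab
  have hmoments : (b - a) ^ (α - 1) * ∫ x, (b - x) ∂μ ≤ ∫ x, (b - x) ^ α ∂μ :=
    calc (b - a) ^ (α - 1) * ∫ x, (b - x) ∂μ ≤ (b - a) ^ (α - 1) * (q * (b - a)) := by gcongr
      _ = q * (b - a) ^ α := by rw [Real.rpow_sub_one hba.ne']; field_simp
      _ ≤ ∫ x, (b - x) ^ α ∂μ := hmoment
  filter_upwards [ae_eq_zero_or_eq_of_mul_integral_le_integral_rpow hα hba.le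
    (hμ.mono fun x hx => ⟨by linarith [hx.2], by linarith [hx.1]⟩)
    (integrable_sub_of_ae_mem_Icc hμ) (integrable_sub_rpow_of_ae_mem_Icc (by linarith) hμ)
    hmoments] with x hx
  exact hx.symm.imp (fun h => sub_right_injective h) fun h => (sub_eq_zero.1 h).symm

end IntervalMoments

section Minorant

variable {α a b c q : ℝ} {v : ℝ → ℝ} {μ : Measure ℝ}

lemma convexOn_exists_mul_div_add_mul_sub_one_le {w : ℝ → ℝ} (hw : ConvexOn ℝ (Icc a b) w)
    (hwb : w b ≤ 0) (hc : c ∈ Ioo a b) :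
    ∃ D, 0 ≤ D ∧ ∀ x ∈ Icc a b,
      w c * ((b - x) / (b - c)) + D * ((b - x) / (b - c) - 1) ≤ w x := by
  have hbc : 0 < b - c := sub_pos.2 hc.2
  obtain ⟨m, hm⟩ := convexOn_exists_add_mul_sub_le hw (by rwa [interior_Icc])
  refine ⟨-(m * (b - c)) - w c, ?_, fun x hx => le_of_eq_of_le ?_ (hm x hx)⟩
  · have hmb := hm b ⟨(hc.1.trans hc.2).le, le_rfl⟩
    linarith
  · field_simp
    ring

lemma AlphaConvexOn.exists_rpow_sub_mul_le (hv : AlphaConvexOn α a b v) (hα : 2 ≤ α)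
    (hvb : v b = 0) (hc : c ∈ Ioo a b) :
    ∃ A B, 0 ≤ A ∧ 0 ≤ B ∧ A * (b - c) ^ α - B * (b - c) = v c ∧
      ∀ x ∈ Icc a b, A * (b - x) ^ α - B * (b - x) ≤ v x := by
  obtain ⟨hnonneg, hconv⟩ := hv
  have hα0 : α ≠ 0 := by linarith
  have hroot_pow : ∀ x ∈ Icc a b, (v x ^ (1 / α)) ^ α = v x := fun x hx => by
    rw [one_div, Real.rpow_inv_rpow (hnonneg x hx) hα0]
  have hcI : c ∈ Icc a b := Ioo_subset_Icc_self hc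
  have hbc : 0 < b - c := sub_pos.2 hc.2
  have hvc : 0 ≤ v c := hnonneg c hcI
  obtain ⟨D, hD, hline⟩ := convexOn_exists_mul_div_add_mul_sub_one_le hconv
    (by rw [hvb, Real.zero_rpow (one_div_ne_zero hα0)]) hc
  set κ := α / (α - 1) * (v c ^ (1 / α)) ^ (α - 1) * D with hκ
  have hκ0 : 0 ≤ κ := by
    have : 0 ≤ α / (α - 1) := div_nonneg (by linarith) (by linarith)
    positivity
  refine ⟨(v c + κ) / (b - c) ^ α, κ / (b - c), by positivity, by positivity, ?_,
    fun x hx => ?_⟩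
  · field_simp
    ring
  · have hbx : 0 ≤ b - x := sub_nonneg.2 hx.2
    have hpow := rpow_mul_add_mul_rpow_sub_self_le hα (Real.rpow_nonneg hvc _) hD
      (by positivity) (Real.rpow_nonneg (hnonneg x hx) _) (hline x hx)
    rw [← hκ, hroot_pow c hcI, hroot_pow x hx, Real.div_rpow hbx hbc.le] at hpow
    refine le_of_eq_of_le ?_ hpow
    ring

lemma AlphaConvexOn.exists_ae_rpow_sub_mul_le [IsFiniteMeasure μ] (hv : AlphaConvexOn α a b v)
    (hα : 2 ≤ α) (hvb : v b = 0) (hc : c ∈ Icc a b) (hμ : ∀ᵐ x ∂μ, x ∈ Icc a b)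
    (hmean : ∫ x, (b - x) ∂μ ≤ q * (b - c))
    (hmoment : q * (b - c) ^ α ≤ ∫ x, (b - x) ^ α ∂μ) :
    ∃ A B, 0 ≤ A ∧ 0 ≤ B ∧ A * (b - c) ^ α - B * (b - c) = v c ∧
      ∀ᵐ x ∂μ, A * (b - x) ^ α - B * (b - x) ≤ v x := by
  have hα0 : α ≠ 0 := by linarith
  rcases hc.2.eq_or_lt with rfl | hcb
  · exact ⟨0, 0, le_rfl, le_rfl, by simp [hvb], hμ.mono fun x hx => by simpa using hv.1 x hx⟩
  have hbc : 0 < b - c := sub_pos.2 hcb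
  rcases hc.1.eq_or_lt with rfl | hac
  · have hends : ∀ᵐ x ∂μ, x = a ∨ x = b :=
      ae_eq_left_or_eq_right_of_moment_bounds (by linarith) hcb hμ hmean hmoment
    refine ⟨v a / (b - a) ^ α, 0, div_nonneg (hv.1 a hc) (by positivity), le_rfl,
      by field_simp; ring, hends.mono fun x hx => ?_⟩
    rcases hx with rfl | rfl
    · rw [zero_mul, sub_zero, div_mul_cancel₀ _ (by positivity)]
    · rw [sub_self, Real.zero_rpow hα0, mul_zero, mul_zero, sub_zero, hvb]
  · obtain ⟨A, B, hA, hB, htouch, hle⟩ := hv.exists_rpow_sub_mul_le hα hvb ⟨hac, hcb⟩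
    exact ⟨A, B, hA, hB, htouch, hμ.mono hle⟩

lemma AlphaConvexOn.mul_le_integral [IsFiniteMeasure μ] (hv : AlphaConvexOn α a b v)
    (hα : 2 ≤ α) (hvb : v b = 0) (hvi : Integrable v μ) (hc : c ∈ Icc a b)
    (hμ : ∀ᵐ x ∂μ, x ∈ Icc a b) (hmean : ∫ x, (b - x) ∂μ ≤ q * (b - c))
    (hmoment : q * (b - c) ^ α ≤ ∫ x, (b - x) ^ α ∂μ) :
    q * v c ≤ ∫ x, v x ∂μ := by
  obtain ⟨A, B, hA, hB, htouch, hle⟩ := hv.exists_ae_rpow_sub_mul_le hα hvb hc hμ hmean hmoment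
  rw [← htouch]
  exact mul_le_integral_of_rpow_sub_mul_le hA hB (integrable_sub_of_ae_mem_Icc hμ)
    (integrable_sub_rpow_of_ae_mem_Icc (by linarith) hμ) hvi hle hmean hmoment

end Minorant

section DiracMixture

variable {E : Type*} [MeasurableSpace E] {p : ℝ} {x y : E}

lemma isProbabilityMeasure_dirac_mixture (hp : p ∈ Icc (0 : ℝ) 1) :
    IsProbabilityMeasure
      (ENNReal.ofReal p • Measure.dirac x + ENNReal.ofReal (1 - p) • Measure.dirac y) :=
  ⟨by simp [← ENNReal.ofReal_add hp.1 (sub_nonneg.2 hp.2)]⟩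

variable [MeasurableSingletonClass E]

lemma integral_dirac_mixture (hp : p ∈ Icc (0 : ℝ) 1) (f : E → ℝ) :
    ∫ z, f z ∂(ENNReal.ofReal p • Measure.dirac x + ENNReal.ofReal (1 - p) • Measure.dirac y)
      = p * f x + (1 - p) * f y := by
  have hi : ∀ z, Integrable f (Measure.dirac z) := fun z => integrable_dirac (by simp)
  rw [integral_add_measure ((hi x).smul_measure ENNReal.ofReal_ne_top)
    ((hi y).smul_measure ENNReal.ofReal_ne_top), integral_smul_measure, integral_smul_measure,
    integral_dirac, integral_dirac, ENNReal.toReal_ofReal hp.1,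
    ENNReal.toReal_ofReal (sub_nonneg.2 hp.2), smul_eq_mul, smul_eq_mul]

lemma ae_dirac_mixture {P : E → Prop} (hx : P x) (hy : P y) :
    ∀ᵐ z ∂(ENNReal.ofReal p • Measure.dirac x + ENNReal.ofReal (1 - p) • Measure.dirac y), P z := by
  rw [ae_add_measure_iff]
  exact ⟨Measure.ae_smul_measure (by simpa [ae_dirac_eq]) _,
    Measure.ae_smul_measure (by simpa [ae_dirac_eq]) _⟩

end DiracMixture

section ConcaveOrder

variable {α a b c q : ℝ} {u : ℝ → ℝ} {μ : Measure ℝ}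

lemma alphaConvexOn_sub_rpow (hα : α ≠ 0) : AlphaConvexOn α a b (fun x => (b - x) ^ α) := by
  have hlin : ConvexOn ℝ (Icc a b) (fun x => b - x) :=
    (convexOn_const b (convex_Icc a b)).sub (concaveOn_id (convex_Icc a b))
  refine ⟨fun x hx => Real.rpow_nonneg (sub_nonneg.2 hx.2) α, hlin.congr fun x hx => ?_⟩
  simp only [one_div, Real.rpow_rpow_inv (sub_nonneg.2 hx.2) hα]

lemma memI_neg_sub_rpow (hα : 0 < α) : MemI α a b (fun x => -(b - x) ^ α) := by
  have hanti : AntitoneOn (fun x => (b - x) ^ α) (Icc a b) := fun x _ y hy hxy =>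
    Real.rpow_le_rpow (sub_nonneg.2 hy.2) (sub_le_sub_left hxy b) hα.le
  refine ⟨⟨(b - a) ^ α, fun x hx => ?_⟩, by fun_prop, hanti.neg, ?_⟩
  · rw [abs_neg, abs_of_nonneg (Real.rpow_nonneg (sub_nonneg.2 hx.2) α)]
    exact hanti ⟨le_rfl, hx.1.trans hx.2⟩ hx hx.1
  · simpa [hα.ne'] using alphaConvexOn_sub_rpow (a := a) (b := b) hα.ne'

lemma MemI.integrable [IsFiniteMeasure μ] (hu : MemI α a b u) (hμ : ∀ᵐ x ∂μ, x ∈ Icc a b) :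
    Integrable u μ := by
  obtain ⟨⟨M, hM⟩, hmeas, -⟩ := hu
  exact Integrable.of_bound hmeas.aestronglyMeasurable M (hμ.mono hM)

theorem stmt_14_general [IsProbabilityMeasure μ] (hα : 2 ≤ α) (hc : c ∈ Icc a b)
    (hq : q ∈ Icc (0 : ℝ) 1) (hμ : ∀ᵐ x ∂μ, x ∈ Icc a b)
    (hmean : q * c + (1 - q) * b ≤ ∫ x, x ∂μ) :
    ConcaveOrder α a b
        (ENNReal.ofReal q • Measure.dirac c + ENNReal.ofReal (1 - q) • Measure.dirac b) μ ↔
      q * (b - c) ^ α ≤ ∫ x, (b - x) ^ α ∂μ := by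
  refine ⟨fun h => ?_, fun hmoment u hu => ?_⟩
  · have htest := h _ (memI_neg_sub_rpow (by linarith))
    rw [integral_dirac_mixture hq, integral_neg, sub_self, Real.zero_rpow (by linarith)] at htest
    linarith
  · have hui := hu.integrable hμ
    have hid : Integrable (fun x => x) μ := Integrable.of_mem_Icc a b aemeasurable_id hμ
    have hmean' : ∫ x, (b - x) ∂μ ≤ q * (b - c) := by
      rw [integral_sub (integrable_const b) hid, integral_const, probReal_univ, one_smul]
      linarith
    have hgap := hu.2.2.2.mul_le_integral hα (sub_self _) ((integrable_const (u b)).sub hui) hc hμ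
      hmean' hmoment
    rw [integral_sub (integrable_const _) hui, integral_const, probReal_univ, one_smul] at hgap
    rw [integral_dirac_mixture hq]
    linarith

end ConcaveOrder

theorem stmt_14 (x₁ x₂ x₃ x₄ p q : ℝ)
    (h12 : x₁ ≤ x₂) (h23 : x₂ ≤ x₃) (h34 : x₃ ≤ x₄) (h14 : x₁ < x₄)
    (hp : p ∈ Icc (0:ℝ) 1) (hq : q ∈ Icc (0:ℝ) 1)
    (hmean : q * x₂ + (1 - q) * x₄ ≤ p * x₁ + (1 - p) * x₃) :
    ConcaveOrder 2 x₁ x₄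
        (ENNReal.ofReal q • Measure.dirac x₂ + ENNReal.ofReal (1 - q) • Measure.dirac x₄)
        (ENNReal.ofReal p • Measure.dirac x₁ + ENNReal.ofReal (1 - p) • Measure.dirac x₃) ↔
      q * (x₄ - x₂) ^ 2 ≤ p * (x₄ - x₁) ^ 2 + (1 - p) * (x₄ - x₃) ^ 2 := by
  have := isProbabilityMeasure_dirac_mixture (x := x₁) (y := x₃) hp
  have hμ := ae_dirac_mixture (p := p) (P := (· ∈ Icc x₁ x₄)) ⟨le_rfl, h14.le⟩ ⟨h12.trans h23, h34⟩
  rw [stmt_14_general le_rfl ⟨h12, h23.trans h34⟩ hq hμ (by rwa [integral_dirac_mixture hp]),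
    integral_dirac_mixture hp]
  simp only [Real.rpow_two]
end
end

section
/- Let α > 1 be a real number, let a < b be reals, and let F and G be Borel probability measures on [a,b]. Suppose that ∫ u dF ≥ ∫ u dG for every weakly decreasing function u : [a,b] → ℝ₊ that is nonnegative and α-convex (i.e., u^(1/α) is convex). Then ∫ u dF ≥ ∫ u dG for every weakly decreasing, convex, twice differentiable function u : [a,b] → ℝ₊ with nonnegative values. -/
open MeasureTheory Set

noncomputable section

/-!
If `φ` is nonnegative and convex then `φ ^ α` is `α`-convex. For `u` antitone and convex on
`[a, b]` and small `t > 0`, this applies to `φ = 1 + t * u`, so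
`∫ (1 + t * u) ^ α ∂G ≤ ∫ (1 + t * u) ^ α ∂F`. Both sides agree at `t = 0` because the measures
have the same mass, so their right derivatives there, `α * ∫ u ∂G` and `α * ∫ u ∂F`, are ordered
in the same way.
-/

open Filter Topology

section DerivativeOfIntegral

variable {Ω : Type*} [MeasurableSpace Ω] {f : ℝ → ℝ} {c B : ℝ} {u : Ω → ℝ}

theorem exists_pos_forall_lipschitzOnWith_comp_mul (hf : HasStrictDerivAt f c 0) (B : ℝ) :
    ∃ r > 0, ∃ K, ∀ y, |y| ≤ B → LipschitzOnWith K (fun t ↦ f (t * y)) (Metric.ball 0 r) := by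
  obtain ⟨K, N, hN, hfN⟩ := hf.hasStrictFDerivAt.exists_lipschitzOnWith
  obtain ⟨r, hr, hrN⟩ := Metric.mem_nhds_iff.mp hN
  have hB : 0 < |B| + 1 := by positivity
  refine ⟨r / (|B| + 1), by positivity, K * B.toNNReal, fun y hy ↦ ?_⟩
  have hmaps : MapsTo (fun t ↦ t * y) (Metric.ball 0 (r / (|B| + 1))) N := fun t ht ↦ by
    rw [mem_ball_zero_iff, lt_div_iff₀ hB] at ht
    refine hrN (mem_ball_zero_iff.mpr ?_)
    have hy' : ‖y‖ ≤ |B| + 1 := by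
      rw [Real.norm_eq_abs]
      linarith [le_abs_self B]
    calc ‖t * y‖ = ‖t‖ * ‖y‖ := norm_mul t y
      _ ≤ ‖t‖ * (|B| + 1) := by gcongr
      _ < r := ht
  have hmul : LipschitzWith B.toNNReal (fun t ↦ t * y) := .of_dist_le_mul fun s t ↦ by
    rw [Real.dist_eq, Real.dist_eq, ← sub_mul, abs_mul, mul_comm]
    gcongr
    exact hy.trans (Real.le_coe_toNNReal B)
  exact hfN.comp hmul.lipschitzOnWith hmaps

theorem hasDerivAt_integral_comp_mul {μ : Measure Ω} [IsFiniteMeasure μ]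
    (hf_meas : Measurable f) (hf : HasStrictDerivAt f c 0)
    (hu_meas : AEMeasurable u μ) (hu_bdd : ∀ᵐ x ∂μ, |u x| ≤ B) :
    HasDerivAt (fun t ↦ ∫ x, f (t * u x) ∂μ) (c * ∫ x, u x ∂μ) 0 := by
  obtain ⟨r, hr, K, hlip⟩ := exists_pos_forall_lipschitzOnWith_comp_mul hf B
  have hderiv (x : Ω) : HasDerivAt (fun t ↦ f (t * u x)) (c * u x) 0 := by
    have hf₀ : HasDerivAt f c (0 * u x) := by simpa only [zero_mul] using hf.hasDerivAt
    exact hf₀.comp 0 (hasDerivAt_mul_const (u x))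
  rw [← integral_const_mul]
  refine (hasDerivAt_integral_of_dominated_loc_of_lip (bound := fun _ ↦ (K : ℝ))
    (Metric.ball_mem_nhds 0 hr) (.of_forall fun t ↦ ?_) ?_
    (hu_meas.const_mul c).aestronglyMeasurable ?_ (integrable_const _) (.of_forall hderiv)).2
  · exact (hf_meas.comp_aemeasurable (hu_meas.const_mul t)).aestronglyMeasurable
  · simp
  · filter_upwards [hu_bdd] with x hx
    simpa only [Real.nnabs_coe] using hlip (u x) hx

theorem integral_le_integral_of_eventually_comp_mul {μ ν : Measure Ω}
    [IsFiniteMeasure μ] [IsFiniteMeasure ν] (hmass : μ univ = ν univ)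
    (hf_meas : Measurable f) (hf : HasStrictDerivAt f c 0) (hc : 0 < c)
    (hμ_meas : AEMeasurable u μ) (hμ_bdd : ∀ᵐ x ∂μ, |u x| ≤ B)
    (hν_meas : AEMeasurable u ν) (hν_bdd : ∀ᵐ x ∂ν, |u x| ≤ B)
    (h : ∀ᶠ t in 𝓝[>] (0 : ℝ), ∫ x, f (t * u x) ∂μ ≤ ∫ x, f (t * u x) ∂ν) :
    ∫ x, u x ∂μ ≤ ∫ x, u x ∂ν := by
  refine le_of_mul_le_mul_left ?_ hc
  refine le_of_tendsto_of_tendsto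
    (hasDerivAt_integral_comp_mul hf_meas hf hμ_meas hμ_bdd).tendsto_slope_zero_right
    (hasDerivAt_integral_comp_mul hf_meas hf hν_meas hν_bdd).tendsto_slope_zero_right ?_
  filter_upwards [h, self_mem_nhdsWithin] with t hle (ht : 0 < t)
  have hmass' : μ.real univ = ν.real univ := congrArg ENNReal.toReal hmass
  simp only [zero_add, zero_mul, integral_const, hmass', smul_eq_mul]
  gcongr

end DerivativeOfIntegral

theorem hasStrictDerivAt_one_add_rpow_zero (α : ℝ) :
    HasStrictDerivAt (fun s : ℝ ↦ (1 + s) ^ α) α 0 := by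
  have hpow : HasStrictDerivAt (fun y : ℝ ↦ y ^ α) α (1 + 0) := by
    simpa using Real.hasStrictDerivAt_rpow_const_of_ne (x := 1) one_ne_zero α
  simpa only [mul_one, Function.comp_def, id] using
    hpow.comp 0 ((hasStrictDerivAt_id (0 : ℝ)).const_add 1)

theorem antitoneOn_one_add_mul_rpow {X : Type*} [Preorder X] {s : Set X} {u : X → ℝ}
    {α t : ℝ} (hα : 0 ≤ α) (ht : 0 ≤ t) (hu : AntitoneOn u s) (hpos : ∀ x ∈ s, 0 ≤ 1 + t * u x) :
    AntitoneOn (fun x ↦ (1 + t * u x) ^ α) s := by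
  intro x hx y hy hxy
  have huyx : u y ≤ u x := hu hx hy hxy
  have hbase : 0 ≤ 1 + t * u y := hpos y hy
  beta_reduce
  gcongr

theorem convexOn_one_add_mul_rpow_rpow_one_div {E : Type*} [AddCommGroup E] [Module ℝ E]
    {s : Set E} {u : E → ℝ} {α t : ℝ} (hα : α ≠ 0) (ht : 0 ≤ t) (hu : ConvexOn ℝ s u)
    (hpos : ∀ x ∈ s, 0 ≤ 1 + t * u x) :
    ConvexOn ℝ s (fun x ↦ ((1 + t * u x) ^ α) ^ (1 / α)) := by
  refine ((convexOn_const 1 hu.1).add (hu.smul ht)).congr fun x hx ↦ ?_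
  simp [Real.rpow_rpow_inv (hpos x hx) hα]

theorem stmt_17_general (α a b : ℝ) (hα : 0 < α) (F G : Measure ℝ)
    [IsFiniteMeasure F] [IsFiniteMeasure G] (hmass : F univ = G univ)
    (hF : F (Icc a b)ᶜ = 0) (hG : G (Icc a b)ᶜ = 0)
    (h : ∀ u : ℝ → ℝ, AntitoneOn u (Icc a b) → (∀ x ∈ Icc a b, 0 ≤ u x) →
      ConvexOn ℝ (Icc a b) (fun x => u x ^ (1 / α)) →
      ∫ x, u x ∂G ≤ ∫ x, u x ∂F)
    (u : ℝ → ℝ) (hanti : AntitoneOn u (Icc a b)) (hconv : ConvexOn ℝ (Icc a b) u) :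
    ∫ x, u x ∂G ≤ ∫ x, u x ∂F := by
  have hbdd : ∀ x ∈ Icc a b, |u x| ≤ max |u b| |u a| := fun x hx ↦
    have hab := hx.1.trans hx.2
    abs_le_max_abs_abs (hanti hx (right_mem_Icc.mpr hab) hx.2)
      (hanti (left_mem_Icc.mpr hab) hx hx.1)
  have hmeas {μ : Measure ℝ} (hμ : μ (Icc a b)ᶜ = 0) : AEMeasurable u μ := by
    rw [← Measure.restrict_eq_self_of_ae_mem (mem_ae_iff.mpr hμ)]
    exact aemeasurable_restrict_of_antitoneOn measurableSet_Icc hanti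
  refine integral_le_integral_of_eventually_comp_mul hmass.symm (by fun_prop)
    (hasStrictDerivAt_one_add_rpow_zero α) hα
    (hmeas hG) (mem_of_superset (mem_ae_iff.mpr hG) hbdd)
    (hmeas hF) (mem_of_superset (mem_ae_iff.mpr hF) hbdd) ?_
  have hpos_b : ∀ᶠ t : ℝ in 𝓝 0, 0 < 1 + t * u b :=
    ContinuousAt.eventually_lt (by fun_prop) (by fun_prop) (by simp)
  filter_upwards [nhdsWithin_le_nhds hpos_b, self_mem_nhdsWithin] with t htb (ht : 0 < t)
  have hpos : ∀ x ∈ Icc a b, 0 ≤ 1 + t * u x := fun x hx ↦ by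
    have hubx : u b ≤ u x := hanti hx (right_mem_Icc.mpr (hx.1.trans hx.2)) hx.2
    exact htb.le.trans (by gcongr)
  exact h _ (antitoneOn_one_add_mul_rpow hα.le ht.le hanti hpos)
    (fun x hx ↦ Real.rpow_nonneg (hpos x hx) α)
    (convexOn_one_add_mul_rpow_rpow_one_div hα.ne' ht.le hconv hpos)

theorem stmt_17 (α a b : ℝ) (hα : 1 < α) (hab : a < b)
    (F G : Measure ℝ) [IsProbabilityMeasure F] [IsProbabilityMeasure G]
    (hF : F (Icc a b)ᶜ = 0) (hG : G (Icc a b)ᶜ = 0)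
    (h : ∀ u : ℝ → ℝ, AntitoneOn u (Icc a b) → (∀ x ∈ Icc a b, 0 ≤ u x) →
      ConvexOn ℝ (Icc a b) (fun x => u x ^ (1 / α)) →
      ∫ x, u x ∂G ≤ ∫ x, u x ∂F) :
    ∀ u u' u'' : ℝ → ℝ,
      (∀ x ∈ Icc a b, HasDerivWithinAt u (u' x) (Icc a b) x) →
      (∀ x ∈ Icc a b, HasDerivWithinAt u' (u'' x) (Icc a b) x) →
      AntitoneOn u (Icc a b) → (∀ x ∈ Icc a b, 0 ≤ u x) →
      ConvexOn ℝ (Icc a b) u →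
      ∫ x, u x ∂G ≤ ∫ x, u x ∂F := by
  intro u _ _ _ _ hanti _ hconv
  exact stmt_17_general α a b (by linarith) F G (by simp) hF hG h u hanti hconv
end
end
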